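/- Let 1 < p, q < ∞, 1 ≤ r, s ≤ 2, and let t > 0 satisfy 1/t ≤ 1/r + 1/s, with (max(r,s) < 2 or t > rs/(r+s)). There exists a constant C such that for every pair of discrete Littlewood–Paley families (f_i)_{i∈ℤ} and (g_j)_{j∈ℤ} and every jump collection (N_k)_{k≥0}, one has ‖ (Σ_{k≥1} |Σ_{N_{k−1}(x) < i < j ≤ N_k(x)} f_i(x) g_j(x)|^t)^{1/t} ‖_{pq/(p+q)} ≤ C ‖(f_i)‖_{p,r} ‖(g_j)‖_{q,s}. (For r = s = 2, p = q, f = g this contains the martingale inequality of Friz and Victoir.) -/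

import Mathlib

/-!
The differences `f i` are sign-symmetric: translating the two halves of each dyadic interval of
length `2 ^ (1 - i)` onto each other preserves the measure, fixes all earlier differences and
negates `f i`. Such sequences satisfy Burkholder's inequality, and this is all that is used.

Suppose first that `|f i|, |g j| ≤ 1`. Greedily reset the partial sums of `f`, of `g` and of the
paraproduct as soon as one of them exceeds `1`. Any family of disjoint blocks on which the
paraproduct is large forces as many resets; the number of resets is at most the sum of
`3 (f i ^ 2 + g i ^ 2)` and a martingale, so Burkholder's inequality bounds its moments. Running
the rule on `ρ ^ l f` and `κ ^ l g`, truncated at `1`, for all `l` at once with weights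
`(ρ κ) ^ (-l t)` detects blocks of all sizes, so that the number of weighted resets dominates the
`t`-variation. With `ρ = 2 ^ (1 / r)` and `κ = 2 ^ (1 / s)` the truncated squares sum over `l` to a
multiple of `|f i| ^ r + |g i| ^ s`: the weights decay because `1 / t ≤ 1 / r + 1 / s`, and the
truncation absorbs the endpoint when `r, s < 2`.

The result is a weak-type estimate in which the size of `f` enters as `min 1 ‖f‖_{ℓ^r} ^ (2 p)`,
with an exponent strictly above `p`. Rescaling `f` and `g` separately and summing over dyadic
levels turns it into the strong-type estimate.
-/

open MeasureTheory ENNReal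
open scoped NNReal

noncomputable section

/-- A jump collection: a sequence of measurable integer-valued functions on `ℝ`,
nondecreasing in the index. -/
def IsJumpCollection (Nk : ℕ → ℝ → ℤ) : Prop :=
  (∀ k, Measurable (Nk k)) ∧ ∀ (k : ℕ) (x : ℝ), Nk k x ≤ Nk (k + 1) x

/-- The dyadic interval `[m 2^(-i), (m+1) 2^(-i))`. -/
def dyadicInterval (i m : ℤ) : Set ℝ :=
  Set.Ico ((m : ℝ) * (2 : ℝ) ^ (-i)) (((m : ℝ) + 1) * (2 : ℝ) ^ (-i))

/-- A discrete Littlewood–Paley family: each `f i` is locally integrable, constant on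
every dyadic interval of length `2^(-i)`, and has integral zero over every dyadic
interval of length `2^(1-i)`. -/
def IsDiscLPFamily (f : ℤ → ℝ → ℝ) : Prop :=
  (∀ i, LocallyIntegrable (f i)) ∧
  (∀ i m : ℤ, ∀ x ∈ dyadicInterval i m, ∀ y ∈ dyadicInterval i m, f i x = f i y) ∧
  (∀ i m : ℤ, ∫ x in dyadicInterval (i - 1) m, f i x = 0)

/-- The mixed norm `‖(f_i)‖_{p,r} = ‖(∑_i |f_i|^r)^(1/r)‖_{L^p}`. -/
def mixedNorm (p r : ℝ) (f : ℤ → ℝ → ℝ) : ℝ≥0∞ :=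
  (∫⁻ x : ℝ, ((∑' i : ℤ, (ENNReal.ofReal |f i x|) ^ r) ^ (1 / r)) ^ p) ^ (1 / p)

open Finset Filter

variable {Ω : Type*} [MeasurableSpace Ω] {μ : Measure Ω}

/-! ### Burkholder's inequality for sign-symmetric differences -/

/-- Conditionally symmetric martingale differences, with the symmetry of the `i`-th difference
realised by a reflection `σ i` of the underlying space which leaves the earlier differences
unchanged. Invariance of the measure under `σ i` is not part of the definition. -/
structure IsConditionallySymmetric {ι : Type*} [LT ι] (σ : ι → Ω → Ω) (f : ι → Ω → ℝ) :
    Prop where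
  measurable : ∀ i, Measurable (f i)
  apply_of_lt : ∀ {i j}, i < j → ∀ x, f i (σ j x) = f i x
  apply_self : ∀ i x, f i (σ i x) = -f i x

lemma IsConditionallySymmetric.sum_range_comp {σ : ℕ → Ω → Ω} {d : ℕ → Ω → ℝ}
    (hd : IsConditionallySymmetric σ d) (φ : ℝ → ℝ) (n : ℕ) (x : Ω) :
    ∑ i ∈ range n, φ (d i (σ n x)) = ∑ i ∈ range n, φ (d i x) :=
  sum_congr rfl fun i hi => by rw [hd.apply_of_lt (mem_range.1 hi)]

lemma lintegral_ofReal_le_of_add_comp_le {σ : Ω → Ω} (hσ : MeasurePreserving σ μ μ)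
    {F H : Ω → ℝ} (hFm : Measurable F) (hHm : Measurable H) (hF : 0 ≤ F) (hH : 0 ≤ H)
    (h : ∀ x, F x + F (σ x) ≤ H x + H (σ x)) :
    ∫⁻ x, ENNReal.ofReal (F x) ∂μ ≤ ∫⁻ x, ENNReal.ofReal (H x) ∂μ := by
  have double : ∀ {G : Ω → ℝ}, Measurable G → 0 ≤ G →
      ∫⁻ x, ENNReal.ofReal (G x + G (σ x)) ∂μ = 2 * ∫⁻ x, ENNReal.ofReal (G x) ∂μ := by
    intro G hGm hG
    simp_rw [ENNReal.ofReal_add (hG _) (hG _)]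
    rw [lintegral_add_left hGm.ennreal_ofReal, hσ.lintegral_comp hGm.ennreal_ofReal, two_mul]
  have := lintegral_mono (μ := μ) fun x => ENNReal.ofReal_le_ofReal (h x)
  rwa [double hFm hF, double hHm hH,
    ENNReal.mul_le_mul_iff_right two_ne_zero ENNReal.ofNat_ne_top] at this

lemma pow_add_mul_sub_le_pow {n : ℕ} (hn : Even n) (x y : ℝ) :
    x ^ n + n * x ^ (n - 1) * (y - x) ≤ y ^ n := by
  have hconv : ConvexOn ℝ Set.univ fun z : ℝ => z ^ n := hn.convexOn_pow
  rcases lt_trichotomy x y with hxy | rfl | hyx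
  · have := hconv.le_slope_of_hasDerivAt trivial trivial hxy (hasDerivAt_pow n x)
    rw [slope_def_field, le_div_iff₀ (sub_pos.2 hxy)] at this
    linarith
  · simp
  · have := hconv.slope_le_of_hasDerivAt trivial trivial hyx (hasDerivAt_pow n x)
    rw [slope_def_field, div_le_iff₀ (sub_pos.2 hyx)] at this
    linarith

lemma abs_geom_sum₂_even_le (m : ℕ) (b c : ℝ) :
    |∑ i ∈ range (2 * m + 1), b ^ i * c ^ (2 * m - i)| ≤
      (2 * m + 1) * (b ^ (2 * m) + c ^ (2 * m)) := by
  have hmax : max |b| |c| ^ (2 * m) ≤ b ^ (2 * m) + c ^ (2 * m) := by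
    have hb : 0 ≤ b ^ (2 * m) := (even_two_mul m).pow_nonneg b
    have hc : 0 ≤ c ^ (2 * m) := (even_two_mul m).pow_nonneg c
    rcases max_cases |b| |c| with ⟨h, -⟩ | ⟨h, -⟩ <;>
      rw [h, (even_two_mul m).pow_abs] <;> linarith
  calc |∑ i ∈ range (2 * m + 1), b ^ i * c ^ (2 * m - i)|
      ≤ ∑ i ∈ range (2 * m + 1), |b ^ i * c ^ (2 * m - i)| := abs_sum_le_sum_abs _ _
    _ ≤ ∑ _i ∈ range (2 * m + 1), max |b| |c| ^ (2 * m) := by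
        refine sum_le_sum fun i hi => ?_
        have hi : i + (2 * m - i) = 2 * m := by have := mem_range.1 hi; omega
        calc |b ^ i * c ^ (2 * m - i)| = |b| ^ i * |c| ^ (2 * m - i) := by
              rw [abs_mul, abs_pow, abs_pow]
          _ ≤ max |b| |c| ^ i * max |b| |c| ^ (2 * m - i) := by
              gcongr
              · exact le_max_left |b| |c|
              · exact le_max_right |b| |c|
          _ = max |b| |c| ^ (2 * m) := by rw [← pow_add, hi]
    _ ≤ (2 * m + 1) * (b ^ (2 * m) + c ^ (2 * m)) := by
        rw [sum_const, card_range, nsmul_eq_mul]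
        push_cast
        gcongr

/-- The constant `K` of the two-point inequality for the exponent `2m + 2`; the constant in
Burkholder's inequality is `(2K) ^ (m + 1)`. -/
def twoPointConst (m : ℕ) : ℝ := 2 * (2 * m + 2) * (2 * m + 1)

lemma twoPointConst_pos (m : ℕ) : 0 < twoPointConst m := by
  unfold twoPointConst
  positivity

lemma add_pow_add_sub_pow_le (m : ℕ) (T a : ℝ) :
    (T + a) ^ (2 * m + 2) + (T - a) ^ (2 * m + 2) ≤ 2 * T ^ (2 * m + 2) +
      twoPointConst m * a ^ 2 * ((T + a) ^ (2 * m) + (T - a) ^ (2 * m)) := by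
  have heven : Even (2 * m + 2) := ⟨m + 1, by ring⟩
  have hplus := pow_add_mul_sub_le_pow heven (T + a) T
  have hminus := pow_add_mul_sub_le_pow heven (T - a) T
  have hgeom := (Commute.all (T + a) (T - a)).geom_sum₂_mul (2 * m + 1)
  simp only [Nat.add_succ_sub_one, add_zero] at hplus hminus hgeom
  push_cast at hplus hminus
  have hsum := mul_le_mul_of_nonneg_left
    ((le_abs_self _).trans (abs_geom_sum₂_even_le m (T + a) (T - a)))
    (show 0 ≤ 2 * (2 * (m : ℝ) + 2) * a ^ 2 by positivity)
  have hdiff : (2 * (m : ℝ) + 2) * a * ((T + a) ^ (2 * m + 1) - (T - a) ^ (2 * m + 1)) =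
      2 * (2 * m + 2) * a ^ 2 *
        ∑ i ∈ range (2 * m + 1), (T + a) ^ i * (T - a) ^ (2 * m - i) := by
    rw [← hgeom]
    ring
  unfold twoPointConst
  linarith

lemma two_mul_pow_le_add_pow_add_sub_pow {n : ℕ} (hn : Even n) (T a : ℝ) :
    2 * T ^ n ≤ (T + a) ^ n + (T - a) ^ n := by
  have hplus := pow_add_mul_sub_le_pow hn T (T + a)
  have hminus := pow_add_mul_sub_le_pow hn T (T - a)
  linarith

section Burkholder

variable {σ : ℕ → Ω → Ω} {d : ℕ → Ω → ℝ}

lemma IsConditionallySymmetric.sum_range_succ_comp (hd : IsConditionallySymmetric σ d) (n : ℕ)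
    (x : Ω) : ∑ i ∈ range (n + 1), d i (σ n x) = ∑ i ∈ range n, d i x - d n x := by
  rw [sum_range_succ, hd.sum_range_comp fun y => y, hd.apply_self, sub_eq_add_neg]

lemma IsConditionallySymmetric.lintegral_pow_succ_le (hσ : ∀ n, MeasurePreserving (σ n) μ μ)
    (hd : IsConditionallySymmetric σ d) (m n : ℕ) :
    ∫⁻ x, ENNReal.ofReal ((∑ i ∈ range (n + 1), d i x) ^ (2 * m + 2)) ∂μ ≤
      ∫⁻ x, ENNReal.ofReal ((∑ i ∈ range n, d i x) ^ (2 * m + 2)) ∂μ +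
        ∫⁻ x, ENNReal.ofReal (twoPointConst m *
          (d n x ^ 2 * (∑ i ∈ range (n + 1), d i x) ^ (2 * m))) ∂μ := by
  have hK := (twoPointConst_pos m).le
  have hdm := hd.measurable
  have hpow : ∀ y : ℝ, 0 ≤ y ^ (2 * m) := (even_two_mul m).pow_nonneg
  have hpow_succ : ∀ y : ℝ, 0 ≤ y ^ (2 * m + 2) := (even_two_mul (m + 1)).pow_nonneg
  rw [← lintegral_add_left (by fun_prop)]
  refine (lintegral_ofReal_le_of_add_comp_le (hσ n) (H := fun x =>
    (∑ i ∈ range n, d i x) ^ (2 * m + 2) + twoPointConst m *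
      (d n x ^ 2 * (∑ i ∈ range (n + 1), d i x) ^ (2 * m))) (by fun_prop) (by fun_prop)
    (fun x => hpow_succ _) (fun x => add_nonneg (hpow_succ _)
      (mul_nonneg hK (mul_nonneg (sq_nonneg _) (hpow _)))) fun x => ?_).trans
    (lintegral_mono fun x => ENNReal.ofReal_add_le)
  simp only [hd.sum_range_succ_comp, hd.sum_range_comp fun y => y, hd.apply_self]
  rw [sum_range_succ]
  linarith [add_pow_add_sub_pow_le m (∑ i ∈ range n, d i x) (d n x)]

lemma IsConditionallySymmetric.lintegral_sum_sq_mul_pow_le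
    (hσ : ∀ n, MeasurePreserving (σ n) μ μ) (hd : IsConditionallySymmetric σ d) {K : ℝ}
    (hK : 0 ≤ K) (m n : ℕ) :
    ∫⁻ x, ENNReal.ofReal
        (K * ((∑ i ∈ range n, d i x ^ 2) * (∑ i ∈ range n, d i x) ^ (2 * m))) ∂μ ≤
      ∫⁻ x, ENNReal.ofReal
        (K * ((∑ i ∈ range n, d i x ^ 2) * (∑ i ∈ range (n + 1), d i x) ^ (2 * m))) ∂μ := by
  have hdm := hd.measurable
  have hV : ∀ x, 0 ≤ ∑ i ∈ range n, d i x ^ 2 := fun x => sum_nonneg fun i _ => sq_nonneg _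
  have hpow : ∀ y : ℝ, 0 ≤ y ^ (2 * m) := (even_two_mul m).pow_nonneg
  refine lintegral_ofReal_le_of_add_comp_le (hσ n) (by fun_prop) (by fun_prop)
    (fun x => mul_nonneg hK (mul_nonneg (hV x) (hpow _)))
    (fun x => mul_nonneg hK (mul_nonneg (hV x) (hpow _))) fun x => ?_
  simp only [hd.sum_range_succ_comp, hd.sum_range_comp (· ^ 2), hd.sum_range_comp fun y => y]
  rw [sum_range_succ]
  linarith [mul_le_mul_of_nonneg_left (two_mul_pow_le_add_pow_add_sub_pow (even_two_mul m)
    (∑ i ∈ range n, d i x) (d n x)) (mul_nonneg hK (hV x))]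

lemma IsConditionallySymmetric.lintegral_pow_le_lintegral_sum_sq_mul_pow
    (hσ : ∀ n, MeasurePreserving (σ n) μ μ) (hd : IsConditionallySymmetric σ d) (m N : ℕ) :
    ∫⁻ x, ENNReal.ofReal ((∑ n ∈ range N, d n x) ^ (2 * m + 2)) ∂μ ≤
      ∫⁻ x, ENNReal.ofReal (twoPointConst m *
        ((∑ n ∈ range N, d n x ^ 2) * (∑ n ∈ range N, d n x) ^ (2 * m))) ∂μ := by
  have hK := (twoPointConst_pos m).le
  have hdm := hd.measurable
  induction N with
  | zero => simp
  | succ n ih =>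
    refine (hd.lintegral_pow_succ_le hσ m n).trans ?_
    refine (add_le_add_left (ih.trans (hd.lintegral_sum_sq_mul_pow_le hσ hK m n)) _).trans_eq ?_
    rw [← lintegral_add_left (by fun_prop)]
    refine lintegral_congr fun x => ?_
    have hpow := (even_two_mul m).pow_nonneg (∑ i ∈ range (n + 1), d i x)
    rw [← ENNReal.ofReal_add (by positivity) (by positivity), sum_range_succ (fun i => d i x ^ 2)]
    ring_nf

lemma mul_pow_le_pow_succ_add_pow_succ {v y : ℝ} (hv : 0 ≤ v) (hy : 0 ≤ y) (m : ℕ) :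
    v * y ^ m ≤ y ^ (m + 1) + v ^ (m + 1) := by
  have hm : v * y ^ m ≤ max v y ^ (m + 1) := by
    rw [pow_succ']
    gcongr
    exacts [le_max_left v y, le_max_right v y]
  rcases max_cases v y with ⟨h, -⟩ | ⟨h, -⟩ <;> rw [h] at hm <;>
    linarith [pow_nonneg hv (m + 1), pow_nonneg hy (m + 1)]

lemma lintegral_sum_pow_le_card_mul_lintegral_sum_sq_pow (d : ℕ → Ω → ℝ) (m N : ℕ) :
    ∫⁻ x, ENNReal.ofReal ((∑ n ∈ range N, d n x) ^ (2 * m + 2)) ∂μ ≤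
      ENNReal.ofReal ((N : ℝ) ^ (m + 1)) *
        ∫⁻ x, ENNReal.ofReal ((∑ n ∈ range N, d n x ^ 2) ^ (m + 1)) ∂μ := by
  rw [← lintegral_const_mul' _ _ ENNReal.ofReal_ne_top]
  refine lintegral_mono fun x => ?_
  rw [← ENNReal.ofReal_mul (by positivity), ← mul_pow, show 2 * m + 2 = 2 * (m + 1) by ring,
    pow_mul]
  gcongr
  simpa using sq_sum_le_card_mul_sum_sq (s := range N) (f := fun n => d n x)

theorem burkholder_even (hσ : ∀ n, MeasurePreserving (σ n) μ μ)
    (hd : IsConditionallySymmetric σ d) (m N : ℕ) :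
    ∫⁻ x, ENNReal.ofReal ((∑ n ∈ range N, d n x) ^ (2 * m + 2)) ∂μ ≤
      ENNReal.ofReal ((2 * twoPointConst m) ^ (m + 1)) *
        ∫⁻ x, ENNReal.ofReal ((∑ n ∈ range N, d n x ^ 2) ^ (m + 1)) ∂μ := by
  have hK : 0 < 2 * twoPointConst m := mul_pos two_pos (twoPointConst_pos m)
  have hdm := hd.measurable
  let T : Ω → ℝ := fun x => ∑ n ∈ range N, d n x
  let V : Ω → ℝ := fun x => ∑ n ∈ range N, d n x ^ 2
  have hTm : Measurable T := by fun_prop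
  have hV : ∀ x, 0 ≤ V x := fun x => sum_nonneg fun i _ => sq_nonneg _
  have hTsq : ∀ x, T x ^ (2 * m + 2) = (T x ^ 2) ^ (m + 1) := fun x => pow_mul _ 2 (m + 1)
  set A := ∫⁻ x, ENNReal.ofReal (T x ^ (2 * m + 2)) ∂μ
  set B := ∫⁻ x, ENNReal.ofReal (V x ^ (m + 1)) ∂μ
  by_cases hBtop : B = ⊤
  · simp [hBtop, ENNReal.mul_top, pow_pos hK]
  have hAtop : A ≠ ⊤ := ne_top_of_le_ne_top (ENNReal.mul_ne_top ENNReal.ofReal_ne_top hBtop)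
    (lintegral_sum_pow_le_card_mul_lintegral_sum_sq_pow d m N)
  have habsorb : 2 * A ≤ A + ENNReal.ofReal ((2 * twoPointConst m) ^ (m + 1)) * B :=
    calc 2 * A ≤ 2 * ∫⁻ x, ENNReal.ofReal (twoPointConst m * (V x * T x ^ (2 * m))) ∂μ := by
          gcongr
          exact hd.lintegral_pow_le_lintegral_sum_sq_mul_pow hσ m N
      _ ≤ ∫⁻ x, ENNReal.ofReal (T x ^ (2 * m + 2)) + ENNReal.ofReal
            ((2 * twoPointConst m) ^ (m + 1)) * ENNReal.ofReal (V x ^ (m + 1)) ∂μ := by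
          rw [← lintegral_const_mul' _ _ ENNReal.ofNat_ne_top]
          refine lintegral_mono fun x => ?_
          rw [← ENNReal.ofReal_mul (by positivity), ← ENNReal.ofReal_ofNat 2,
            ← ENNReal.ofReal_mul two_pos.le, ← mul_pow, hTsq, ← ENNReal.ofReal_add
            (pow_nonneg (sq_nonneg _) _) (pow_nonneg (mul_nonneg hK.le (hV x)) _)]
          refine ENNReal.ofReal_le_ofReal ?_
          have := mul_pow_le_pow_succ_add_pow_succ (mul_nonneg hK.le (hV x)) (sq_nonneg (T x)) m
          rw [← pow_mul (T x) 2 m] at this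
          linarith
      _ = A + ENNReal.ofReal ((2 * twoPointConst m) ^ (m + 1)) * B := by
          rw [lintegral_add_left (by fun_prop), lintegral_const_mul' _ _ ENNReal.ofReal_ne_top]
  rw [two_mul] at habsorb
  exact (ENNReal.add_le_add_iff_left hAtop).1 habsorb

end Burkholder

/-! ### The greedy stopping rule -/

/-- The block `∑_{a ≤ i < j < b} f i * g j` of the paraproduct of two sequences. -/
def blockSum {ι : Type*} [Preorder ι] [LocallyFiniteOrder ι] (f g : ι → ℝ) (a b : ι) : ℝ :=
  ∑ j ∈ Ico a b, ∑ i ∈ Ico a j, f i * g j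

/-- The update of a state `(∑ x i, ∑ y i, ∑_{i < j} x i * y j)` of the stopping rule, the sums being
taken over the indices since the last reset, by the next entries `x` and `y`. -/
def advance (S : ℝ × ℝ × ℝ) (x y : ℝ) : ℝ × ℝ × ℝ :=
  (S.1 + x, S.2.1 + y, S.2.2 + S.1 * y)

/-- The state of the greedy stopping rule before the `n`-th entries are read: it is reset to zero
whenever advancing would leave the unit ball of the sup norm. -/
def greedyState (x y : ℕ → ℝ) : ℕ → ℝ × ℝ × ℝ
  | 0 => 0
  | n + 1 =>
    if ‖advance (greedyState x y n) (x n) (y n)‖ ≤ 1 then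
      advance (greedyState x y n) (x n) (y n)
    else 0

/-- The number of resets of the greedy stopping rule before time `N`. -/
def greedyCount (x y : ℕ → ℝ) (N : ℕ) : ℕ :=
  #{n ∈ range N | 1 < ‖advance (greedyState x y n) (x n) (y n)‖}

/-- The Euclidean energy of a state. -/
def energy (S : ℝ × ℝ × ℝ) : ℝ := S.1 ^ 2 + S.2.1 ^ 2 + S.2.2 ^ 2

/-- The part of `energy (advance S x y) - energy S` that is odd in `(x, y)`, cut off to zero for
large entries. -/
def energyIncrement (S : ℝ × ℝ × ℝ) (x y : ℝ) : ℝ :=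
  if |x| ≤ 1 ∧ |y| ≤ 1 then 2 * S.1 * x + 2 * (S.2.1 + S.2.2 * S.1) * y else 0

lemma norm_prod₃_le_one_iff {S : ℝ × ℝ × ℝ} :
    ‖S‖ ≤ 1 ↔ |S.1| ≤ 1 ∧ |S.2.1| ≤ 1 ∧ |S.2.2| ≤ 1 := by
  simp [Prod.norm_def]

lemma energy_nonneg (S : ℝ × ℝ × ℝ) : 0 ≤ energy S := by
  unfold energy
  positivity

lemma energy_le_three {S : ℝ × ℝ × ℝ} (hS : ‖S‖ ≤ 1) : energy S ≤ 3 := by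
  obtain ⟨h₁, h₂, h₃⟩ := norm_prod₃_le_one_iff.1 hS
  rw [← sq_le_one_iff_abs_le_one] at h₁ h₂ h₃
  unfold energy
  linarith

lemma one_le_energy {S : ℝ × ℝ × ℝ} (hS : 1 < ‖S‖) : 1 ≤ energy S := by
  contrapose! hS
  have : S.1 ^ 2 + S.2.1 ^ 2 + S.2.2 ^ 2 < 1 := hS
  simp only [norm_prod₃_le_one_iff, ← sq_le_one_iff_abs_le_one]
  exact ⟨by nlinarith, by nlinarith, by nlinarith⟩

lemma energy_advance_le {S : ℝ × ℝ × ℝ} (hS : ‖S‖ ≤ 1) {x y : ℝ} (hx : |x| ≤ 1) (hy : |y| ≤ 1) :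
    energy (advance S x y) ≤ energy S + (x ^ 2 + 2 * y ^ 2) + energyIncrement S x y := by
  have hS₁ := mul_le_mul_of_nonneg_right
    ((sq_le_one_iff_abs_le_one _).2 (norm_prod₃_le_one_iff.1 hS).1) (sq_nonneg y)
  simp only [energy, advance, energyIncrement, hx, hy, and_self, if_true]
  linarith

lemma energyIncrement_neg (S : ℝ × ℝ × ℝ) (x y : ℝ) :
    energyIncrement S (-x) (-y) = -energyIncrement S x y := by
  simp only [energyIncrement, abs_neg]
  split_ifs <;> ring

lemma abs_energyIncrement_le {S : ℝ × ℝ × ℝ} (hS : ‖S‖ ≤ 1) (x y : ℝ) :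
    |energyIncrement S x y| ≤ 4 * min 1 |x| + 4 * min 1 |y| := by
  obtain ⟨h₁, h₂, h₃⟩ := norm_prod₃_le_one_iff.1 hS
  unfold energyIncrement
  split_ifs with h
  · have hcoeff : |S.2.1 + S.2.2 * S.1| ≤ 2 := by
      refine (abs_add_le _ _).trans ?_
      rw [abs_mul]
      linarith [mul_le_one₀ h₃ (abs_nonneg _) h₁]
    rw [min_eq_right h.1, min_eq_right h.2]
    refine (abs_add_le _ _).trans ?_
    simp only [abs_mul, abs_two]
    gcongr <;> linarith
  · simp only [abs_zero]
    positivity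

section GreedyState

variable (x y : ℕ → ℝ)

lemma greedyState_succ_of_le {n : ℕ} (h : ‖advance (greedyState x y n) (x n) (y n)‖ ≤ 1) :
    greedyState x y (n + 1) = advance (greedyState x y n) (x n) (y n) := if_pos h

lemma greedyState_succ_of_lt {n : ℕ} (h : 1 < ‖advance (greedyState x y n) (x n) (y n)‖) :
    greedyState x y (n + 1) = 0 := if_neg h.not_ge

lemma norm_greedyState_le_one (n : ℕ) : ‖greedyState x y n‖ ≤ 1 := by
  cases n with
  | zero => simp [greedyState]
  | succ n =>
    rcases le_or_gt ‖advance (greedyState x y n) (x n) (y n)‖ 1 with h | h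
    · rwa [greedyState_succ_of_le x y h]
    · simp [greedyState_succ_of_lt x y h]

lemma greedyState_congr {x y x' y' : ℕ → ℝ} {n : ℕ} (hx : ∀ i < n, x i = x' i)
    (hy : ∀ i < n, y i = y' i) : greedyState x y n = greedyState x' y' n := by
  induction n with
  | zero => rfl
  | succ n ih =>
    simp only [greedyState, hx n n.lt_succ_self, hy n n.lt_succ_self,
      ih (fun i hi => hx i (hi.trans n.lt_succ_self)) fun i hi => hy i (hi.trans n.lt_succ_self)]

lemma greedyCount_succ (n : ℕ) :
    greedyCount x y (n + 1) = greedyCount x y n +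
      if 1 < ‖advance (greedyState x y n) (x n) (y n)‖ then 1 else 0 := by
  simp only [greedyCount, card_filter, sum_range_succ]

lemma greedyCount_mono : Monotone (greedyCount x y) :=
  monotone_nat_of_le_succ fun n => greedyCount_succ x y n ▸ Nat.le_add_right _ _

lemma greedyCount_step_le (n : ℕ) :
    (greedyCount x y (n + 1) : ℝ) + energy (greedyState x y (n + 1)) ≤
      greedyCount x y n + energy (greedyState x y n) +
        3 * (min 1 |x n| ^ 2 + min 1 |y n| ^ 2) +
          energyIncrement (greedyState x y n) (x n) (y n) := by
  have hnorm := norm_greedyState_le_one x y n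
  have hE := energy_nonneg (greedyState x y n)
  have hcount : (greedyCount x y (n + 1) : ℝ) + energy (greedyState x y (n + 1)) ≤
      greedyCount x y n + min 3 (energy (advance (greedyState x y n) (x n) (y n))) := by
    rw [greedyCount_succ]
    rcases le_or_gt ‖advance (greedyState x y n) (x n) (y n)‖ 1 with h | h
    · simp [greedyState_succ_of_le x y h, energy_le_three h, h.not_gt]
    · have := le_min (show (1 : ℝ) ≤ 3 by norm_num) (one_le_energy h)
      simpa [greedyState_succ_of_lt x y h, h, energy] using this
  by_cases hsmall : |x n| ≤ 1 ∧ |y n| ≤ 1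
  · have hadv := energy_advance_le hnorm hsmall.1 hsmall.2
    rw [min_eq_right hsmall.1, min_eq_right hsmall.2, sq_abs, sq_abs]
    linarith [min_le_right (3 : ℝ) (energy (advance (greedyState x y n) (x n) (y n))),
      sq_nonneg (x n), sq_nonneg (y n)]
  · have hlarge : 1 ≤ min 1 |x n| ^ 2 + min 1 |y n| ^ 2 := by
      rcases not_and_or.1 hsmall with h | h <;> rw [min_eq_left (not_le.1 h).le] <;>
        linarith [sq_nonneg (min 1 |x n|), sq_nonneg (min 1 |y n|)]
    rw [energyIncrement, if_neg hsmall]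
    linarith [min_le_left (3 : ℝ) (energy (advance (greedyState x y n) (x n) (y n)))]

lemma greedyCount_le (N : ℕ) :
    (greedyCount x y N : ℝ) ≤ 3 * ∑ n ∈ range N, (min 1 |x n| ^ 2 + min 1 |y n| ^ 2) +
      ∑ n ∈ range N, energyIncrement (greedyState x y n) (x n) (y n) := by
  suffices (greedyCount x y N : ℝ) + energy (greedyState x y N) ≤
      3 * ∑ n ∈ range N, (min 1 |x n| ^ 2 + min 1 |y n| ^ 2) +
        ∑ n ∈ range N, energyIncrement (greedyState x y n) (x n) (y n) from
    (le_add_of_nonneg_right (energy_nonneg _)).trans this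
  induction N with
  | zero => simp [greedyCount, greedyState, energy]
  | succ n ih =>
    rw [sum_range_succ, sum_range_succ]
    linarith [greedyCount_step_le x y n]

variable {x y} {m n : ℕ}

lemma norm_advance_le_one_of_greedyCount_eq (h : greedyCount x y m = greedyCount x y n) {j : ℕ}
    (hmj : m ≤ j) (hjn : j < n) : ‖advance (greedyState x y j) (x j) (y j)‖ ≤ 1 := by
  by_contra! hj
  have hsucc := greedyCount_succ x y j
  rw [if_pos hj] at hsucc
  have := greedyCount_mono x y hmj
  have := greedyCount_mono x y (show j + 1 ≤ n from hjn)
  omega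

lemma greedyState_eq_of_greedyCount_eq (hmn : m ≤ n) (h : greedyCount x y m = greedyCount x y n) :
    greedyState x y n =
      ((greedyState x y m).1 + ∑ i ∈ Ico m n, x i,
        (greedyState x y m).2.1 + ∑ i ∈ Ico m n, y i,
        (greedyState x y m).2.2 + (greedyState x y m).1 * ∑ i ∈ Ico m n, y i +
          blockSum x y m n) := by
  induction n, hmn using Nat.le_induction with
  | base => simp [blockSum]
  | succ n hmn ih =>
    have hn : greedyCount x y m = greedyCount x y n :=
      (greedyCount_mono x y hmn).antisymm (h ▸ greedyCount_mono x y n.le_succ)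
    rw [greedyState_succ_of_le x y (norm_advance_le_one_of_greedyCount_eq h hmn n.lt_succ_self),
      ih hn]
    simp only [advance, blockSum, sum_Ico_succ_top hmn, ← sum_mul]
    ext <;> ring

lemma abs_blockSum_le_of_greedyCount_eq (hmn : m ≤ n)
    (h : greedyCount x y m = greedyCount x y n) : |blockSum x y m n| ≤ 4 := by
  obtain ⟨h₁, h₂, h₃⟩ := norm_prod₃_le_one_iff.1 (norm_greedyState_le_one x y m)
  obtain ⟨-, h₅, h₆⟩ := norm_prod₃_le_one_iff.1 (norm_greedyState_le_one x y n)
  have hstate := greedyState_eq_of_greedyCount_eq hmn h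
  have hblock : blockSum x y m n = (greedyState x y n).2.2 - (greedyState x y m).2.2 -
      (greedyState x y m).1 * ((greedyState x y n).2.1 - (greedyState x y m).2.1) := by
    rw [hstate]
    ring
  have hw := (abs_sub _ _).trans (add_le_add h₆ h₃)
  have hy := (abs_sub _ _).trans (add_le_add h₅ h₂)
  rw [hblock]
  refine (abs_sub _ _).trans ?_
  rw [abs_mul]
  linarith [mul_le_mul h₁ hy (abs_nonneg _) zero_le_one]

lemma card_large_blockSum_le (x y : ℕ → ℝ) {N : ℕ → ℕ} (hN : Monotone N) (K : ℕ) :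
    #{k ∈ range K | 4 < |blockSum x y (N k) (N (k + 1))|} ≤ greedyCount x y (N K) := by
  induction K with
  | zero => simp
  | succ K ih =>
    have hmono := greedyCount_mono x y (hN (Nat.le_add_right K 1))
    rw [card_filter, sum_range_succ, ← card_filter]
    split_ifs with hlarge
    · have : greedyCount x y (N K) ≠ greedyCount x y (N (K + 1)) := fun h =>
        hlarge.not_ge (abs_blockSum_le_of_greedyCount_eq (hN K.le_succ) h)
      omega
    · omega

end GreedyState

lemma measurable_advance {S : Ω → ℝ × ℝ × ℝ} {x y : Ω → ℝ} (hS : Measurable S)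
    (hx : Measurable x) (hy : Measurable y) : Measurable fun ω => advance (S ω) (x ω) (y ω) := by
  unfold advance
  fun_prop

lemma measurable_greedyState {x y : ℕ → Ω → ℝ} (hx : ∀ n, Measurable (x n))
    (hy : ∀ n, Measurable (y n)) (n : ℕ) :
    Measurable fun ω => greedyState (x · ω) (y · ω) n := by
  induction n with
  | zero => exact measurable_const
  | succ n ih =>
    have hadv := measurable_advance ih (hx n) (hy n)
    exact Measurable.ite (measurableSet_le hadv.norm measurable_const) hadv measurable_const

lemma measurable_energyIncrement {S : Ω → ℝ × ℝ × ℝ} {x y : Ω → ℝ} (hS : Measurable S)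
    (hx : Measurable x) (hy : Measurable y) :
    Measurable fun ω => energyIncrement (S ω) (x ω) (y ω) := by
  refine Measurable.ite ?_ (by fun_prop) measurable_const
  exact (measurableSet_le hx.abs measurable_const).inter (measurableSet_le hy.abs measurable_const)

/-! ### Geometric sums of truncated powers -/

section GeometricSums

lemma tsum_zpow_mul_min_one_zpow_mul {ρ : ℝ≥0∞} (hρ : 1 < ρ) (hρ_top : ρ ≠ ⊤) {a : ℝ}
    (ha : 0 ≤ a) (b : ℝ) (m : ℤ) (x : ℝ≥0∞) :
    ∑' n : ℤ, (ρ ^ n) ^ a * min 1 (ρ ^ m * x / ρ ^ n) ^ b =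
      (ρ ^ m) ^ a * ∑' n : ℤ, (ρ ^ n) ^ a * min 1 (x / ρ ^ n) ^ b := by
  have hρ₀ : ρ ≠ 0 := (zero_lt_one.trans hρ).ne'
  rw [← (Equiv.addLeft m).tsum_eq, ← ENNReal.tsum_mul_left]
  refine tsum_congr fun n => ?_
  rw [Equiv.coe_addLeft, ENNReal.zpow_add hρ₀ hρ_top, ENNReal.mul_rpow_of_nonneg _ _ ha,
    ENNReal.mul_div_mul_left _ _ (ENNReal.zpow_pos hρ₀ hρ_top m).ne'
      (ENNReal.zpow_lt_top hρ₀ hρ_top m).ne, mul_assoc]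

lemma tsum_zpow_mul_min_one_inv_ne_top {ρ : ℝ≥0∞} (hρ : 1 < ρ) (hρ_top : ρ ≠ ⊤) {a b : ℝ}
    (ha : 0 < a) (hab : a < b) :
    ∑' n : ℤ, (ρ ^ n) ^ a * min 1 (1 / ρ ^ n) ^ b ≠ ⊤ := by
  have hρ₀ : ρ ≠ 0 := (zero_lt_one.trans hρ).ne'
  have geometric : ∀ {c : ℝ}, c < 0 → ∑' n : ℕ, (ρ ^ c) ^ n ≠ ⊤ := fun hc => by
    rw [ENNReal.tsum_geometric, ENNReal.inv_ne_top]
    exact (tsub_pos_of_lt (ENNReal.rpow_lt_one_of_one_lt_of_neg hρ hc)).ne'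
  rw [tsum_of_nat_of_neg_add_one ENNReal.summable ENNReal.summable]
  refine ENNReal.add_ne_top.2 ⟨ne_top_of_le_ne_top (geometric (sub_neg.2 hab))
    (ENNReal.tsum_le_tsum fun n => ?_), ne_top_of_le_ne_top (geometric (neg_neg_iff_pos.2 ha))
    (ENNReal.tsum_le_tsum fun n => ?_)⟩
  · calc (ρ ^ (n : ℤ)) ^ a * min 1 (1 / ρ ^ (n : ℤ)) ^ b
        ≤ (ρ ^ (n : ℤ)) ^ a * (1 / ρ ^ (n : ℤ)) ^ b := by
          gcongr
          exacts [(ha.trans hab).le, min_le_right _ _]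
      _ = (ρ ^ (a - b)) ^ n := by
          rw [one_div, ← ENNReal.rpow_intCast, ← ENNReal.rpow_natCast, ← ENNReal.rpow_neg,
            ← ENNReal.rpow_mul, ← ENNReal.rpow_mul, ← ENNReal.rpow_mul,
            ← ENNReal.rpow_add _ _ hρ₀ hρ_top]
          push_cast
          ring_nf
  · calc (ρ ^ (-((n : ℤ) + 1))) ^ a * min 1 (1 / ρ ^ (-((n : ℤ) + 1))) ^ b
        ≤ (ρ ^ (-((n : ℤ) + 1))) ^ a * 1 := by
          gcongr
          exact ENNReal.rpow_le_one (min_le_left _ _) (ha.trans hab).le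
      _ ≤ (ρ ^ (-a)) ^ n := by
          rw [mul_one, ← ENNReal.rpow_intCast, ← ENNReal.rpow_natCast, ← ENNReal.rpow_mul,
            ← ENNReal.rpow_mul]
          refine ENNReal.rpow_le_rpow_of_exponent_le hρ.le ?_
          push_cast
          linarith

lemma exists_tsum_zpow_mul_min_one_le {ρ : ℝ≥0∞} (hρ : 1 < ρ) (hρ_top : ρ ≠ ⊤) {a b : ℝ}
    (ha : 0 < a) (hab : a < b) : ∃ C : ℝ≥0, ∀ x : ℝ≥0∞,
      ∑' n : ℤ, (ρ ^ n) ^ a * min 1 (x / ρ ^ n) ^ b ≤ C * x ^ a := by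
  have hρ₀ : ρ ≠ 0 := (zero_lt_one.trans hρ).ne'
  have hb : 0 < b := ha.trans hab
  let F : ℝ≥0∞ → ℝ≥0∞ := fun x => ∑' n : ℤ, (ρ ^ n) ^ a * min 1 (x / ρ ^ n) ^ b
  have hF_mono : Monotone F := fun x y hxy => by
    refine ENNReal.tsum_le_tsum fun n => ?_
    gcongr
  have hF_one : 1 ≤ F 1 := by
    simpa [F] using ENNReal.le_tsum (f := fun n : ℤ => (ρ ^ n) ^ a * min 1 (1 / ρ ^ n) ^ b) 0
  have hC : ρ ^ a * F 1 ≠ ⊤ := ENNReal.mul_ne_top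
    (ENNReal.rpow_ne_top_of_nonneg ha.le hρ_top)
    (tsum_zpow_mul_min_one_inv_ne_top hρ hρ_top ha hab)
  refine ⟨(ρ ^ a * F 1).toNNReal, fun x => ?_⟩
  rw [ENNReal.coe_toNNReal hC]
  change F x ≤ _
  rcases eq_or_ne x 0 with rfl | hx
  · simp [F, hb]
  rcases eq_or_ne x ⊤ with rfl | hx_top
  · have : ρ ^ a * F 1 ≠ 0 := mul_ne_zero (by simp [hρ₀, hρ_top])
      (zero_lt_one.trans_le hF_one).ne'
    simp [ENNReal.top_rpow_of_pos ha, ENNReal.mul_top this]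
  obtain ⟨m, hmx, hxm⟩ := ENNReal.exists_mem_Ico_zpow hx hx_top hρ hρ_top
  calc F x ≤ F (ρ ^ (m + 1) * 1) := hF_mono (by rw [mul_one]; exact hxm.le)
    _ = (ρ ^ (m + 1)) ^ a * F 1 := tsum_zpow_mul_min_one_zpow_mul hρ hρ_top ha.le b _ 1
    _ ≤ ρ ^ a * F 1 * x ^ a := by
        rw [ENNReal.zpow_add hρ₀ hρ_top, zpow_one, mul_comm, mul_comm (ρ ^ m),
          ENNReal.mul_rpow_of_nonneg _ _ ha.le, mul_left_comm, ← mul_assoc]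
        gcongr

lemma sum_pow_mul_min_one_le_of_lt {w ρ a β : ℝ} (hw : 0 ≤ w) (hρ : 0 ≤ ρ) (ha : 0 ≤ a)
    (haβ : a ≤ β) (h : w * ρ ^ a < 1) {x : ℝ} (hx : 0 ≤ x) (L : ℕ) :
    ∑ l ∈ range L, w ^ l * min 1 (ρ ^ l * x) ^ β ≤ (1 - w * ρ ^ a)⁻¹ * x ^ a := by
  have hterm : ∀ l, w ^ l * min 1 (ρ ^ l * x) ^ β ≤ (w * ρ ^ a) ^ l * x ^ a := fun l => by
    have hy : 0 ≤ ρ ^ l * x := by positivity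
    have : min 1 (ρ ^ l * x) ^ β ≤ (ρ ^ l * x) ^ a :=
      (Real.rpow_le_rpow_of_exponent_ge' (le_min zero_le_one hy) (min_le_left _ _) ha haβ).trans
        (Real.rpow_le_rpow (le_min zero_le_one hy) (min_le_right _ _) ha)
    calc w ^ l * min 1 (ρ ^ l * x) ^ β ≤ w ^ l * (ρ ^ l * x) ^ a := by gcongr
      _ = (w * ρ ^ a) ^ l * x ^ a := by
        rw [Real.mul_rpow (by positivity) hx, ← Real.rpow_pow_comm hρ, mul_pow, mul_assoc]
  refine (sum_le_sum fun l _ => hterm l).trans ?_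
  rw [← sum_mul]
  gcongr
  have hgeom := hasSum_geometric_of_lt_one (by positivity : 0 ≤ w * ρ ^ a) h
  exact sum_le_hasSum _ (fun l _ => by positivity) hgeom

lemma exists_sum_pow_mul_min_one_le_of_le {w ρ a β : ℝ} (hw : 0 ≤ w) (hρ : 1 < ρ) (ha : 0 < a)
    (haβ : a < β) (h : w * ρ ^ a ≤ 1) : ∃ C : ℝ, ∀ x : ℝ, 0 ≤ x → ∀ L : ℕ,
      ∑ l ∈ range L, w ^ l * min 1 (ρ ^ l * x) ^ β ≤ C * x ^ a := by
  have hρ₀ : 0 < ρ := zero_lt_one.trans hρ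
  obtain ⟨C, hC⟩ := exists_tsum_zpow_mul_min_one_le (ENNReal.one_lt_ofReal.2 hρ)
    ENNReal.ofReal_ne_top ha haβ
  refine ⟨C, fun x hx L => ?_⟩
  have hterm : ∀ l : ℕ, ENNReal.ofReal (w ^ l * min 1 (ρ ^ l * x) ^ β) ≤
      (ENNReal.ofReal ρ ^ (-(l : ℤ))) ^ a *
        min 1 (ENNReal.ofReal x / ENNReal.ofReal ρ ^ (-(l : ℤ))) ^ β := fun l => by
    have hw_le : w ^ l ≤ ((ρ ^ l) ^ a)⁻¹ := by
      rw [← Real.rpow_pow_comm hρ₀.le, ← inv_pow]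
      gcongr
      rwa [← one_div, le_div_iff₀ (by positivity)]
    rw [ENNReal.zpow_neg, div_eq_mul_inv, inv_inv, zpow_natCast, ← ENNReal.ofReal_pow hρ₀.le,
      mul_comm (ENNReal.ofReal x), ← ENNReal.ofReal_mul (by positivity), ENNReal.inv_rpow,
      ENNReal.ofReal_rpow_of_pos (by positivity), ← ENNReal.ofReal_inv_of_pos (by positivity),
      ← ENNReal.ofReal_one, ← ENNReal.ofReal_min,
      ENNReal.ofReal_rpow_of_nonneg (by positivity) (by linarith),
      ← ENNReal.ofReal_mul (by positivity)]
    exact ENNReal.ofReal_le_ofReal (by gcongr)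
  have hsum : ENNReal.ofReal (∑ l ∈ range L, w ^ l * min 1 (ρ ^ l * x) ^ β) ≤
      ENNReal.ofReal (C * x ^ a) := by
    rw [ENNReal.ofReal_sum_of_nonneg fun l _ => by positivity, ENNReal.ofReal_mul C.coe_nonneg,
      ENNReal.ofReal_coe_nnreal, ← ENNReal.ofReal_rpow_of_nonneg hx ha.le]
    refine ((sum_le_sum fun l _ => hterm l).trans (ENNReal.sum_le_tsum _)).trans
      (le_trans ?_ (hC _))
    exact ENNReal.tsum_comp_le_tsum_of_injective (neg_injective.comp Nat.cast_injective) _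
  exact (ENNReal.ofReal_le_ofReal_iff (by positivity)).1 hsum

end GeometricSums

lemma rpow_le_mul_sum_pow_mul_ite {b c t v : ℝ} (hb : 0 < b) (ht : 0 ≤ t) (hv : 0 ≤ v)
    (hvc : v ≤ c) {L : ℕ} (hlevel : ∃ l < L, c < b ^ l * v) :
    v ^ t ≤ (c * b) ^ t * ∑ l ∈ range L, (b ^ (-t)) ^ l * if c < b ^ l * v then 1 else 0 := by
  obtain ⟨l₀, hl₀L, hl₀⟩ := hlevel
  have hc : 0 ≤ c := hv.trans hvc
  obtain ⟨l, hl, hmin⟩ := Nat.findX (p := fun l => c < b ^ l * v) ⟨l₀, hl₀⟩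
  have hlL : l < L := (not_lt.1 fun h => hmin l₀ h hl₀).trans_lt hl₀L
  obtain ⟨l, rfl⟩ : ∃ l', l = l' + 1 := Nat.exists_eq_succ_of_ne_zero fun h₀ => by
    subst h₀
    linarith
  have hle : v ≤ c * b * (b ^ (l + 1))⁻¹ := by
    rw [le_mul_inv_iff₀ (by positivity), pow_succ]
    nlinarith [not_lt.1 (hmin l l.lt_succ_self)]
  calc v ^ t ≤ (c * b * (b ^ (l + 1))⁻¹) ^ t := Real.rpow_le_rpow hv hle ht
    _ = (c * b) ^ t * ((b ^ (-t)) ^ (l + 1) * if c < b ^ (l + 1) * v then 1 else 0) := by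
      rw [if_pos hl, mul_one, Real.mul_rpow (by positivity) (by positivity),
        Real.inv_rpow (by positivity), ← Real.rpow_pow_comm hb.le, Real.rpow_neg hb.le, inv_pow]
    _ ≤ _ := by
      gcongr
      exact single_le_sum (f := fun l => (b ^ (-t)) ^ l * if c < b ^ l * v then (1 : ℝ) else 0)
        (fun l _ => by positivity) (mem_range.2 hlL)

lemma sum_rpow_le_of_weighted_card_lt_one {b c t : ℝ} (hb : 0 < b) (hc : 0 ≤ c) (ht : 0 < t)
    {v : ℕ → ℝ} {K L : ℕ} (hv : ∀ k, 0 ≤ v k)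
    (hlevel : ∀ k < K, v k ≠ 0 → ∃ l < L, c < b ^ l * v k)
    (hcard : ∑ l ∈ range L, (b ^ (-t)) ^ l * (#{k ∈ range K | c < b ^ l * v k} : ℝ) < 1) :
    ∑ k ∈ range K, v k ^ t ≤ (c * b) ^ t := by
  have hterm : ∀ k ∈ range K, v k ^ t ≤
      (c * b) ^ t * ∑ l ∈ range L, (b ^ (-t)) ^ l * if c < b ^ l * v k then 1 else 0 := by
    intro k hk
    rcases eq_or_ne (v k) 0 with hzero | hne
    · rw [hzero, Real.zero_rpow ht.ne']
      positivity
    have hlevel := hlevel k (mem_range.1 hk) hne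
    refine rpow_le_mul_sum_pow_mul_ite hb ht.le (hv k) (not_lt.1 fun hlt => ?_) hlevel
    have hpos : 0 < #{k ∈ range K | c < b ^ 0 * v k} :=
      card_pos.2 ⟨k, mem_filter.2 ⟨hk, by rwa [pow_zero, one_mul]⟩⟩
    have := (single_le_sum (f := fun l => (b ^ (-t)) ^ l *
      (#{k ∈ range K | c < b ^ l * v k} : ℝ)) (fun l _ => by positivity)
      (mem_range.2 (hlevel.choose_spec.1.pos))).trans_lt hcard
    rw [pow_zero (b ^ (-t)), one_mul, Nat.cast_lt_one] at this
    omega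
  calc ∑ k ∈ range K, v k ^ t
      ≤ ∑ k ∈ range K, (c * b) ^ t *
          ∑ l ∈ range L, (b ^ (-t)) ^ l * if c < b ^ l * v k then 1 else 0 := sum_le_sum hterm
    _ = (c * b) ^ t * ∑ l ∈ range L, (b ^ (-t)) ^ l * (#{k ∈ range K | c < b ^ l * v k} : ℝ) := by
        rw [← mul_sum, sum_comm]
        simp only [← mul_sum, sum_boole]
    _ ≤ (c * b) ^ t := mul_le_of_le_one_right (by positivity) hcard.le

/-! ### Superposing all scales -/

lemma blockSum_smul_smul {ι : Type*} [Preorder ι] [LocallyFiniteOrder ι] (c d : ℝ) (f g : ι → ℝ)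
    (a b : ι) : blockSum (c • f) (d • g) a b = c * d * blockSum f g a b := by
  simp only [blockSum, mul_sum, Pi.smul_apply, smul_eq_mul]
  exact sum_congr rfl fun j _ => sum_congr rfl fun i _ => by ring

/-- Scaling by the powers of `ρ`, with the geometric weight `w`, controls `r`-th powers: the two
sums below, which compare the truncations at all scales with a power of `x`, arise from the energy
and from the martingale increments of the greedy stopping rule. -/
structure ControlsPower (w ρ r C : ℝ) : Prop where
  sum_sq_le : ∀ x, 0 ≤ x → ∀ L, ∑ l ∈ range L, w ^ l * min 1 (ρ ^ l * x) ^ 2 ≤ C * x ^ r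
  sum_le : ∀ x, 0 ≤ x → ∀ L, ∑ l ∈ range L, w ^ l * min 1 (ρ ^ l * x) ≤ C * x ^ (r / 2)

lemma ControlsPower.mono {w ρ r C C' : ℝ} (h : ControlsPower w ρ r C) (hC : C ≤ C') :
    ControlsPower w ρ r C' where
  sum_sq_le x hx L := (h.sum_sq_le x hx L).trans (by gcongr)
  sum_le x hx L := (h.sum_le x hx L).trans (by gcongr)

lemma exists_controlsPower {w ρ r : ℝ} (hw : 0 ≤ w) (hρ : 1 < ρ) (hr : 0 < r) (hr₂ : r ≤ 2)
    (hle : w * ρ ^ r ≤ 1) (hlt : r < 2 ∨ w * ρ ^ r < 1) : ∃ C, ControlsPower w ρ r C := by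
  have hρ₀ : 0 < ρ := zero_lt_one.trans hρ
  obtain ⟨C₂, hC₂⟩ : ∃ C : ℝ, ∀ x : ℝ, 0 ≤ x → ∀ L : ℕ,
      ∑ l ∈ range L, w ^ l * min 1 (ρ ^ l * x) ^ (2 : ℝ) ≤ C * x ^ r := by
    rcases hlt with hr_lt | hlt
    · exact exists_sum_pow_mul_min_one_le_of_le hw hρ hr hr_lt hle
    · exact ⟨_, fun x hx => sum_pow_mul_min_one_le_of_lt hw hρ₀.le hr.le hr₂ hlt hx⟩
  have hlt_half : w * ρ ^ (r / 2) < 1 := by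
    rcases hw.eq_or_lt with rfl | hw_pos
    · simp
    · exact (mul_lt_mul_of_pos_left (Real.rpow_lt_rpow_of_exponent_lt hρ (half_lt_self hr))
        hw_pos).trans_le hle
  have hC₁ := fun x (hx : (0 : ℝ) ≤ x) => sum_pow_mul_min_one_le_of_lt (β := 1) hw hρ₀.le
    (half_pos hr).le (by linarith) hlt_half hx
  simp only [Real.rpow_one, Real.rpow_ofNat] at hC₁ hC₂
  refine ⟨max C₂ (1 - w * ρ ^ (r / 2))⁻¹, ⟨fun x hx L => (hC₂ x hx L).trans ?_,
    fun x hx L => (hC₁ x hx L).trans ?_⟩⟩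
  · gcongr
    exact le_max_left _ _
  · gcongr
    exact le_max_right _ _

/-- The number of resets of the greedy stopping rule run simultaneously at `L` scales. -/
def weightedCount (w ρ κ : ℝ) (L : ℕ) (x y : ℕ → ℝ) (N : ℕ) : ℝ :=
  ∑ l ∈ range L, w ^ l * greedyCount (ρ ^ l • x) (κ ^ l • y) N

/-- The energy increment of the greedy stopping rule run simultaneously at `L` scales. -/
def weightedIncrement (w ρ κ : ℝ) (L : ℕ) (x y : ℕ → ℝ) (n : ℕ) : ℝ :=
  ∑ l ∈ range L, w ^ l * energyIncrement (greedyState (ρ ^ l • x) (κ ^ l • y) n)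
    (ρ ^ l * x n) (κ ^ l * y n)

section WeightedCount

variable {w ρ κ r s C : ℝ}

lemma weightedCount_congr {L N : ℕ} {x y x' y' : ℕ → ℝ} (hx : ∀ i < N, x i = x' i)
    (hy : ∀ i < N, y i = y' i) : weightedCount w ρ κ L x y N = weightedCount w ρ κ L x' y' N := by
  refine sum_congr rfl fun l _ => ?_
  congr 2
  refine congrArg card (filter_congr fun n hn => ?_)
  have hn := mem_range.1 hn
  rw [greedyState_congr (x' := ρ ^ l • x') (y' := κ ^ l • y')
    (fun i hi => by simp [hx i (hi.trans hn)]) fun i hi => by simp [hy i (hi.trans hn)]]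
  simp only [Pi.smul_apply, hx n hn, hy n hn]

lemma weightedCount_le (hw : 0 ≤ w) (hρ : 0 ≤ ρ) (hκ : 0 ≤ κ) (hρr : ControlsPower w ρ r C)
    (hκs : ControlsPower w κ s C) (L : ℕ) (x y : ℕ → ℝ) (N : ℕ) :
    weightedCount w ρ κ L x y N ≤ 3 * C * ∑ n ∈ range N, (|x n| ^ r + |y n| ^ s) +
      ∑ n ∈ range N, weightedIncrement w ρ κ L x y n := by
  have hcount : ∀ l, (greedyCount (ρ ^ l • x) (κ ^ l • y) N : ℝ) ≤
      3 * ∑ n ∈ range N, (min 1 (ρ ^ l * |x n|) ^ 2 + min 1 (κ ^ l * |y n|) ^ 2) +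
        ∑ n ∈ range N, energyIncrement (greedyState (ρ ^ l • x) (κ ^ l • y) n)
          (ρ ^ l * x n) (κ ^ l * y n) := fun l => by
    simpa [abs_mul, abs_of_nonneg hρ, abs_of_nonneg hκ] using
      greedyCount_le (ρ ^ l • x) (κ ^ l • y) N
  calc weightedCount w ρ κ L x y N
      ≤ ∑ l ∈ range L, w ^ l *
          (3 * ∑ n ∈ range N, (min 1 (ρ ^ l * |x n|) ^ 2 + min 1 (κ ^ l * |y n|) ^ 2) +
            ∑ n ∈ range N, energyIncrement (greedyState (ρ ^ l • x) (κ ^ l • y) n)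
              (ρ ^ l * x n) (κ ^ l * y n)) :=
        sum_le_sum fun l _ => mul_le_mul_of_nonneg_left (hcount l) (pow_nonneg hw l)
    _ = 3 * ∑ n ∈ range N, (∑ l ∈ range L, w ^ l * min 1 (ρ ^ l * |x n|) ^ 2 +
            ∑ l ∈ range L, w ^ l * min 1 (κ ^ l * |y n|) ^ 2) +
          ∑ n ∈ range N, weightedIncrement w ρ κ L x y n := by
        simp only [weightedIncrement, mul_add, sum_add_distrib, mul_sum]
        rw [sum_comm, sum_comm (s := range L), sum_comm (s := range L)]
        simp only [mul_left_comm]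
    _ ≤ 3 * C * ∑ n ∈ range N, (|x n| ^ r + |y n| ^ s) +
          ∑ n ∈ range N, weightedIncrement w ρ κ L x y n := by
        rw [mul_assoc, mul_sum _ _ C]
        gcongr with n
        rw [mul_add]
        exact add_le_add (hρr.sum_sq_le _ (abs_nonneg _) L) (hκs.sum_sq_le _ (abs_nonneg _) L)

lemma weightedIncrement_sq_le (hw : 0 ≤ w) (hρ : 0 ≤ ρ) (hκ : 0 ≤ κ)
    (hρr : ControlsPower w ρ r C) (hκs : ControlsPower w κ s C) (L : ℕ) (x y : ℕ → ℝ) (n : ℕ) :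
    weightedIncrement w ρ κ L x y n ^ 2 ≤ 32 * C ^ 2 * (|x n| ^ r + |y n| ^ s) := by
  have habs : |weightedIncrement w ρ κ L x y n| ≤
      4 * (C * |x n| ^ (r / 2)) + 4 * (C * |y n| ^ (s / 2)) :=
    calc |weightedIncrement w ρ κ L x y n|
        ≤ ∑ l ∈ range L, w ^ l * (4 * min 1 (ρ ^ l * |x n|) + 4 * min 1 (κ ^ l * |y n|)) := by
          refine (abs_sum_le_sum_abs _ _).trans (sum_le_sum fun l _ => ?_)
          rw [abs_mul, abs_of_nonneg (pow_nonneg hw l)]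
          refine mul_le_mul_of_nonneg_left ?_ (pow_nonneg hw l)
          simpa [abs_mul, abs_of_nonneg hρ, abs_of_nonneg hκ] using
            abs_energyIncrement_le (norm_greedyState_le_one _ _ n) (ρ ^ l * x n) (κ ^ l * y n)
      _ = 4 * ∑ l ∈ range L, w ^ l * min 1 (ρ ^ l * |x n|) +
            4 * ∑ l ∈ range L, w ^ l * min 1 (κ ^ l * |y n|) := by
          simp only [mul_add, sum_add_distrib, mul_sum, mul_left_comm]
      _ ≤ _ := by
          gcongr
          exacts [hρr.sum_le _ (abs_nonneg _) L, hκs.sum_le _ (abs_nonneg _) L]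
  have hsq : ∀ (z e : ℝ), (|z| ^ (e / 2)) ^ 2 = |z| ^ e := fun z e => by
    rw [← Real.rpow_mul_natCast (abs_nonneg z)]
    norm_num
  calc weightedIncrement w ρ κ L x y n ^ 2
      ≤ (4 * (C * |x n| ^ (r / 2)) + 4 * (C * |y n| ^ (s / 2))) ^ 2 := by
        rw [← sq_abs]
        gcongr
    _ ≤ 32 * C ^ 2 * ((|x n| ^ (r / 2)) ^ 2 + (|y n| ^ (s / 2)) ^ 2) := by
        linarith [sq_nonneg (4 * (C * |x n| ^ (r / 2)) - 4 * (C * |y n| ^ (s / 2)))]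
    _ = 32 * C ^ 2 * (|x n| ^ r + |y n| ^ s) := by rw [hsq, hsq]

lemma isConditionallySymmetric_weightedIncrement {σ : ℕ → Ω → Ω} {f g : ℕ → Ω → ℝ}
    (hf : IsConditionallySymmetric σ f) (hg : IsConditionallySymmetric σ g) (L : ℕ) :
    IsConditionallySymmetric σ fun n ω => weightedIncrement w ρ κ L (f · ω) (g · ω) n where
  measurable n := by
    refine measurable_sum _ fun l _ => measurable_const.mul ?_
    have hfm := fun i => (hf.measurable i).const_mul (ρ ^ l)
    have hgm := fun i => (hg.measurable i).const_mul (κ ^ l)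
    exact measurable_energyIncrement (measurable_greedyState hfm hgm n) (hfm n) (hgm n)
  apply_of_lt {i j} hij ω := by
    refine sum_congr rfl fun l _ => ?_
    simp only
    rw [hf.apply_of_lt hij, hg.apply_of_lt hij, greedyState_congr]
    · exact fun k hk => by simp [hf.apply_of_lt (hk.trans hij)]
    · exact fun k hk => by simp [hg.apply_of_lt (hk.trans hij)]
  apply_self i ω := by
    simp only [weightedIncrement, ← sum_neg_distrib]
    refine sum_congr rfl fun l _ => ?_
    rw [hf.apply_self, hg.apply_self, mul_neg, mul_neg, energyIncrement_neg, mul_neg,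
      greedyState_congr]
    · exact fun k hk => by simp [hf.apply_of_lt hk]
    · exact fun k hk => by simp [hg.apply_of_lt hk]

lemma sum_abs_blockSum_rpow_le {t : ℝ} (hρ : 0 < ρ) (hκ : 0 < κ) (ht : 0 < t) {x y : ℕ → ℝ}
    {N₀ L K : ℕ} {N : ℕ → ℕ} (hN : Monotone N) (hN₀ : ∀ k, N k ≤ N₀)
    (hL : ∀ k < K, blockSum x y (N k) (N (k + 1)) ≠ 0 →
      ∃ l < L, 4 < (ρ * κ) ^ l * |blockSum x y (N k) (N (k + 1))|)
    (hcount : weightedCount ((ρ * κ) ^ (-t)) ρ κ L x y N₀ < 1) :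
    ∑ k ∈ range K, |blockSum x y (N k) (N (k + 1))| ^ t ≤ (4 * (ρ * κ)) ^ t := by
  refine sum_rpow_le_of_weighted_card_lt_one (L := L) (by positivity) (by norm_num) ht
    (fun k => abs_nonneg _) (fun k hk hne => hL k hk (abs_ne_zero.1 hne)) (lt_of_le_of_lt ?_ hcount)
  refine sum_le_sum fun l _ => ?_
  gcongr
  refine le_trans (le_of_eq ?_) ((card_large_blockSum_le (ρ ^ l • x) (κ ^ l • y) hN K).trans
    (greedyCount_mono _ _ (hN₀ K)))
  simp [blockSum_smul_smul, abs_mul, abs_of_pos, hρ, hκ, mul_pow]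

lemma eventually_forall_exists_lt_pow_mul_abs {b : ℝ} (hb : 1 < b) (v : ℕ → ℝ) (K : ℕ) :
    ∀ᶠ L in atTop, ∀ k < K, v k ≠ 0 → ∃ l < L, 4 < b ^ l * |v k| := by
  simp only [← mem_range, eventually_all_finset]
  refine fun k _ => ?_
  by_cases hne : v k = 0
  · simp [hne]
  obtain ⟨l, hl⟩ := pow_unbounded_of_one_lt (4 / |v k|) hb
  filter_upwards [eventually_gt_atTop l] with L hL _
  exact ⟨l, mem_range.2 hL, (div_lt_iff₀ (abs_pos.2 hne)).1 hl⟩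

end WeightedCount

section WeakTypeBounded

lemma ControlsPower.nonneg {w ρ r C : ℝ} (h : ControlsPower w ρ r C) : 0 ≤ C := by
  simpa using h.sum_sq_le 1 zero_le_one 0

/-- The constant in the distributional estimate for `weightedCount`. -/
def countConst (C : ℝ) (M : ℕ) : ℝ :=
  (6 * C) ^ (M + 1) + (256 * twoPointConst M * C ^ 2) ^ (M + 1)

variable {w ρ κ r s C : ℝ} {σ : ℕ → Ω → Ω} {f g : ℕ → Ω → ℝ}

lemma lintegral_sum_weightedIncrement_pow_le (hσ : ∀ n, MeasurePreserving (σ n) μ μ)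
    (hf : IsConditionallySymmetric σ f) (hg : IsConditionallySymmetric σ g) (hw : 0 ≤ w)
    (hρ : 0 ≤ ρ) (hκ : 0 ≤ κ) (hρr : ControlsPower w ρ r C) (hκs : ControlsPower w κ s C)
    (L M N : ℕ) :
    ∫⁻ ω, ENNReal.ofReal
        ((2 * ∑ n ∈ range N, weightedIncrement w ρ κ L (f · ω) (g · ω) n) ^ (2 * M + 2)) ∂μ ≤
      ENNReal.ofReal ((256 * twoPointConst M * C ^ 2) ^ (M + 1)) *
        ∫⁻ ω, ENNReal.ofReal ((∑ n ∈ range N, (|f n ω| ^ r + |g n ω| ^ s)) ^ (M + 1)) ∂μ := by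
  have hK := twoPointConst_pos M
  have hburkholder := burkholder_even hσ
    (isConditionallySymmetric_weightedIncrement (w := w) (ρ := ρ) (κ := κ) hf hg L) M N
  have hscale : ∀ z : ℝ, ENNReal.ofReal ((2 * z) ^ (2 * M + 2)) =
      ENNReal.ofReal (4 ^ (M + 1)) * ENNReal.ofReal (z ^ (2 * M + 2)) := fun z => by
    rw [← ENNReal.ofReal_mul (by positivity), mul_pow, show 2 * M + 2 = 2 * (M + 1) by ring,
      pow_mul 2]
    norm_num
  have hsq : ∀ ω, ENNReal.ofReal
      ((∑ n ∈ range N, weightedIncrement w ρ κ L (f · ω) (g · ω) n ^ 2) ^ (M + 1)) ≤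
      ENNReal.ofReal ((32 * C ^ 2) ^ (M + 1)) *
        ENNReal.ofReal ((∑ n ∈ range N, (|f n ω| ^ r + |g n ω| ^ s)) ^ (M + 1)) := fun ω => by
    rw [← ENNReal.ofReal_mul (by positivity), ← mul_pow, mul_sum]
    gcongr with n
    exact weightedIncrement_sq_le hw hρ hκ hρr hκs L _ _ n
  simp_rw [hscale]
  rw [lintegral_const_mul' _ _ ENNReal.ofReal_ne_top]
  refine (mul_le_mul_right (hburkholder.trans (mul_le_mul_right (lintegral_mono hsq) _)) _).trans_eq
    ?_
  rw [lintegral_const_mul' _ _ ENNReal.ofReal_ne_top, ← mul_assoc, ← mul_assoc,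
    ← ENNReal.ofReal_mul (by positivity), ← ENNReal.ofReal_mul (by positivity), ← mul_pow,
    ← mul_pow]
  ring_nf

lemma measure_one_le_weightedCount_le (hσ : ∀ n, MeasurePreserving (σ n) μ μ)
    (hf : IsConditionallySymmetric σ f) (hg : IsConditionallySymmetric σ g) (hw : 0 ≤ w)
    (hρ : 0 ≤ ρ) (hκ : 0 ≤ κ) (hρr : ControlsPower w ρ r C) (hκs : ControlsPower w κ s C)
    (L M N : ℕ) :
    μ {ω | 1 ≤ weightedCount w ρ κ L (f · ω) (g · ω) N} ≤ ENNReal.ofReal (countConst C M) *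
      ∫⁻ ω, ENNReal.ofReal ((∑ n ∈ range N, (|f n ω| ^ r + |g n ω| ^ s)) ^ (M + 1)) ∂μ := by
  have hfm := hf.measurable
  have hgm := hg.measurable
  have hC := hρr.nonneg
  have hK := (twoPointConst_pos M).le
  let A : Ω → ℝ := fun ω => ∑ n ∈ range N, (|f n ω| ^ r + |g n ω| ^ s)
  let T : Ω → ℝ := fun ω => ∑ n ∈ range N, weightedIncrement w ρ κ L (f · ω) (g · ω) n
  have hA : ∀ ω, 0 ≤ A ω := fun ω => by positivity
  have hAm : Measurable A := by fun_prop
  have hTm : Measurable T := measurable_sum _ fun n _ =>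
    (isConditionallySymmetric_weightedIncrement hf hg L).measurable n
  have hone_le : ∀ ω, 1 ≤ weightedCount w ρ κ L (f · ω) (g · ω) N →
      1 ≤ (6 * C * A ω) ^ (M + 1) + (2 * T ω) ^ (2 * M + 2) := fun ω hω => by
    have hAT := hω.trans (weightedCount_le hw hρ hκ hρr hκs L (f · ω) (g · ω) N)
    have hApow : 0 ≤ (6 * C * A ω) ^ (M + 1) := by have := hA ω; positivity
    have hTpow : 0 ≤ (2 * T ω) ^ (2 * M + 2) := (even_two_mul (M + 1)).pow_nonneg _
    rcases le_or_gt 1 (6 * C * A ω) with h | h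
    · linarith [one_le_pow₀ h (n := M + 1)]
    · linarith [one_le_pow₀ (show 1 ≤ 2 * T ω by linarith) (n := 2 * M + 2)]
  calc μ {ω | 1 ≤ weightedCount w ρ κ L (f · ω) (g · ω) N}
      ≤ ∫⁻ ω, ENNReal.ofReal ((6 * C * A ω) ^ (M + 1)) +
          ENNReal.ofReal ((2 * T ω) ^ (2 * M + 2)) ∂μ := by
        refine meas_le_lintegral₀ (by fun_prop) fun ω hω => ?_
        exact (ENNReal.one_le_ofReal.2 (hone_le ω hω)).trans ENNReal.ofReal_add_le
    _ ≤ ENNReal.ofReal ((6 * C) ^ (M + 1)) * ∫⁻ ω, ENNReal.ofReal (A ω ^ (M + 1)) ∂μ +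
          ENNReal.ofReal ((256 * twoPointConst M * C ^ 2) ^ (M + 1)) *
            ∫⁻ ω, ENNReal.ofReal (A ω ^ (M + 1)) ∂μ := by
        rw [lintegral_add_left (by fun_prop), ← lintegral_const_mul' _ _ ENNReal.ofReal_ne_top]
        refine add_le_add (lintegral_mono fun ω => ?_)
          (lintegral_sum_weightedIncrement_pow_le hσ hf hg hw hρ hκ hρr hκs L M N)
        rw [← ENNReal.ofReal_mul (by positivity), ← mul_pow]
    _ = _ := by
        rw [← add_mul, ← ENNReal.ofReal_add (by positivity) (by positivity), countConst]

/-- The sequence `a` stopped as soon as the sum of the `r`-th powers of its entries exceeds one. -/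
def truncate (r : ℝ) (a : ℕ → ℝ) (n : ℕ) : ℝ :=
  if ∑ i ∈ range (n + 1), |a i| ^ r ≤ 1 then a n else 0

lemma abs_truncate_le (r : ℝ) (a : ℕ → ℝ) (n : ℕ) : |truncate r a n| ≤ |a n| := by
  unfold truncate
  split_ifs <;> simp

lemma truncate_eq_self {a : ℕ → ℝ} {N n : ℕ} (hN : ∑ i ∈ range N, |a i| ^ r ≤ 1) (hn : n < N) :
    truncate r a n = a n :=
  if_pos ((sum_le_sum_of_subset_of_nonneg (range_mono hn) fun _ _ _ => by positivity).trans hN)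

lemma sum_abs_truncate_rpow_le (hr : 0 < r) (a : ℕ → ℝ) (N : ℕ) :
    ∑ n ∈ range N, |truncate r a n| ^ r ≤ min 1 (∑ n ∈ range N, |a n| ^ r) := by
  have hle : ∀ N, ∑ n ∈ range N, |truncate r a n| ^ r ≤ ∑ n ∈ range N, |a n| ^ r := fun N =>
    sum_le_sum fun n _ => Real.rpow_le_rpow (abs_nonneg _) (abs_truncate_le r a n) hr.le
  refine le_min ?_ (hle N)
  induction N with
  | zero => simp
  | succ n ih =>
    by_cases h : ∑ i ∈ range (n + 1), |a i| ^ r ≤ 1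
    · exact (hle _).trans h
    · rw [sum_range_succ, truncate, if_neg h, abs_zero, Real.zero_rpow hr.ne', add_zero]
      exact ih

lemma IsConditionallySymmetric.abs_apply {ι : Type*} [PartialOrder ι] {σ : ι → Ω → Ω}
    {f : ι → Ω → ℝ} (hf : IsConditionallySymmetric σ f) {i j : ι} (hij : i ≤ j) (ω : Ω) :
    |f i (σ j ω)| = |f i ω| := by
  rcases hij.eq_or_lt with rfl | hij
  · rw [hf.apply_self, abs_neg]
  · rw [hf.apply_of_lt hij]

lemma isConditionallySymmetric_truncate (hf : IsConditionallySymmetric σ f) (r : ℝ) :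
    IsConditionallySymmetric σ fun n ω => truncate r (f · ω) n := by
  have hsum : ∀ {n j}, n ≤ j → ∀ ω,
      ∑ i ∈ range (n + 1), |f i (σ j ω)| ^ r = ∑ i ∈ range (n + 1), |f i ω| ^ r := fun hnj ω =>
    sum_congr rfl fun i hi => by rw [hf.abs_apply ((mem_range_succ_iff.1 hi).trans hnj)]
  refine ⟨fun n => ?_, fun hij ω => ?_, fun i ω => ?_⟩
  · have hfm := hf.measurable
    exact Measurable.ite (measurableSet_le (by fun_prop) measurable_const) (hfm n) measurable_const
  · simp only [truncate, hsum hij.le, hf.apply_of_lt hij]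
  · simp only [truncate, hsum le_rfl, hf.apply_self]
    split_ifs <;> simp

lemma measure_one_le_weightedCount_le_lintegral_min_one
    (hσ : ∀ n, MeasurePreserving (σ n) μ μ) (hf : IsConditionallySymmetric σ f)
    (hg : IsConditionallySymmetric σ g) (hr : 0 < r) (hs : 0 < s) (hw : 0 ≤ w)
    (hρ : 0 ≤ ρ) (hκ : 0 ≤ κ) (hρr : ControlsPower w ρ r C) (hκs : ControlsPower w κ s C)
    (L M N : ℕ) :
    μ {ω | 1 ≤ weightedCount w ρ κ L (f · ω) (g · ω) N} ≤
      (ENNReal.ofReal (countConst C M) + 1) * ∫⁻ ω, ENNReal.ofReal ((min 1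
        (∑ n ∈ range N, |f n ω| ^ r) + min 1 (∑ n ∈ range N, |g n ω| ^ s)) ^ (M + 1)) ∂μ := by
  have hfm := hf.measurable
  have hgm := hg.measurable
  let A : Ω → ℝ := fun ω => ∑ n ∈ range N, |f n ω| ^ r
  let B : Ω → ℝ := fun ω => ∑ n ∈ range N, |g n ω| ^ s
  have hA : ∀ ω, 0 ≤ A ω := fun ω => by positivity
  have hB : ∀ ω, 0 ≤ B ω := fun ω => by positivity
  let E : Set Ω := {ω | 1 ≤ weightedCount w ρ κ L (truncate r (f · ω))
    (truncate s (g · ω)) N}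
  have hsubset : {ω | 1 ≤ weightedCount w ρ κ L (f · ω) (g · ω) N} ⊆
      E ∪ {ω | 1 < A ω ∨ 1 < B ω} := fun ω hω => by
    rw [Set.mem_union, or_iff_not_imp_right]
    intro hsmall
    obtain ⟨hAω, hBω⟩ := not_or.1 hsmall
    change 1 ≤ weightedCount w ρ κ L (truncate r (f · ω)) (truncate s (g · ω)) N
    rw [weightedCount_congr (x' := (f · ω)) (y' := (g · ω)) (fun i hi =>
      truncate_eq_self (not_lt.1 hAω) hi) fun i hi => truncate_eq_self (not_lt.1 hBω) hi]
    exact hω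
  rw [add_mul, one_mul]
  refine (measure_mono hsubset).trans ((measure_union_le _ _).trans (add_le_add ?_ ?_))
  · refine (measure_one_le_weightedCount_le hσ (isConditionallySymmetric_truncate hf r)
      (isConditionallySymmetric_truncate hg s) hw hρ hκ hρr hκs L M N).trans
      ?_
    gcongr with ω
    rw [sum_add_distrib]
    exact add_le_add (sum_abs_truncate_rpow_le hr _ N) (sum_abs_truncate_rpow_le hs _ N)
  · refine meas_le_lintegral₀ (by fun_prop) fun ω hω => ENNReal.one_le_ofReal.2 (one_le_pow₀ ?_)
    rcases hω with h | h
    · exact (min_eq_left h.le).symm.trans_le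
        (le_add_of_nonneg_right (le_min zero_le_one (hB ω)))
    · exact (min_eq_left h.le).symm.trans_le
        (le_add_of_nonneg_left (le_min zero_le_one (hA ω)))

end WeakTypeBounded

/-! ### The weak-type estimate -/

/-- The `ℓ^r` norm of a family of reals. -/
def lrNorm {ι : Type*} (r : ℝ) (a : ι → ℝ) : ℝ≥0∞ :=
  (∑' i, ENNReal.ofReal |a i| ^ r) ^ (1 / r)

/-- The `t`-variation of the paraproduct of two sequences, over all increasing sequences of cuts. -/
def paraproductVariation (t : ℝ) (f g : ℤ → ℝ) : ℝ≥0∞ :=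
  ⨆ (N : ℕ → ℤ) (_ : Monotone N), lrNorm t fun k => blockSum f g (N k) (N (k + 1))

section LrNorm

variable {ι : Type*} {r : ℝ}

lemma lrNorm_rpow (hr : r ≠ 0) (a : ι → ℝ) : lrNorm r a ^ r = ∑' i, ENNReal.ofReal |a i| ^ r := by
  rw [lrNorm, ← ENNReal.rpow_mul, one_div_mul_cancel hr, ENNReal.rpow_one]

lemma lrNorm_smul (hr : 0 < r) (c : ℝ) (a : ι → ℝ) :
    lrNorm r (c • a) = ENNReal.ofReal |c| * lrNorm r a := by
  simp only [lrNorm, Pi.smul_apply, smul_eq_mul, abs_mul, ENNReal.ofReal_mul (abs_nonneg c),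
    ENNReal.mul_rpow_of_nonneg _ _ hr.le]
  rw [ENNReal.tsum_mul_left, ENNReal.mul_rpow_of_nonneg _ _ (by positivity), ← ENNReal.rpow_mul,
    mul_one_div_cancel hr.ne', ENNReal.rpow_one]

lemma lrNorm_eq_zero_iff (hr : 0 < r) {a : ι → ℝ} : lrNorm r a = 0 ↔ a = 0 := by
  rw [lrNorm, ENNReal.rpow_eq_zero_iff_of_pos (one_div_pos.2 hr), ENNReal.tsum_eq_zero]
  simp [ENNReal.rpow_eq_zero_iff_of_pos hr, funext_iff]

lemma measurable_lrNorm [Countable ι] {f : ι → Ω → ℝ} (hf : ∀ i, Measurable (f i)) (r : ℝ) :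
    Measurable fun ω => lrNorm r (f · ω) := by
  unfold lrNorm
  fun_prop

lemma exists_lt_sum_of_lt_lrNorm (hr : 0 < r) {c : ℝ} (hc : 0 ≤ c) {v : ℕ → ℝ}
    (h : ENNReal.ofReal c < lrNorm r v) : ∃ K, c ^ r < ∑ k ∈ range K, |v k| ^ r := by
  have hpow := ENNReal.rpow_lt_rpow h hr
  rw [lrNorm_rpow hr.ne', ENNReal.tsum_eq_iSup_nat, lt_iSup_iff] at hpow
  obtain ⟨K, hK⟩ := hpow
  simp only [ENNReal.ofReal_rpow_of_nonneg (abs_nonneg _) hr.le,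
    ENNReal.ofReal_rpow_of_nonneg hc hr.le] at hK
  rw [← ENNReal.ofReal_sum_of_nonneg fun _ _ => by positivity] at hK
  exact ⟨K, (ENNReal.ofReal_lt_ofReal_iff_of_nonneg (by positivity)).1 hK⟩

lemma ofReal_min_one_sum_le (hr : 0 < r) (a : ι → ℝ) {e : ℕ → ι} (he : Function.Injective e)
    (N : ℕ) :
    ENNReal.ofReal (min 1 (∑ n ∈ range N, |a (e n)| ^ r)) ≤ min 1 (lrNorm r a) ^ r := by
  rw [ENNReal.ofReal_min, ENNReal.ofReal_one, (ENNReal.monotone_rpow_of_nonneg hr.le).map_min,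
    ENNReal.one_rpow, lrNorm_rpow hr.ne', ENNReal.ofReal_sum_of_nonneg fun _ _ => by positivity]
  simp only [← ENNReal.ofReal_rpow_of_nonneg (abs_nonneg _) hr.le]
  exact min_le_min_left _ ((ENNReal.sum_le_tsum _).trans
    (ENNReal.tsum_comp_le_tsum_of_injective he fun i => ENNReal.ofReal |a i| ^ r))

lemma ofReal_min_one_sum_pow_le (hr : 0 < r) {b : ℝ} {m : ℕ} (hb : b ≤ r * m) (a : ι → ℝ)
    {e : ℕ → ι} (he : Function.Injective e) (N : ℕ) :
    ENNReal.ofReal (min 1 (∑ n ∈ range N, |a (e n)| ^ r) ^ m) ≤ min 1 (lrNorm r a) ^ b := by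
  rw [ENNReal.ofReal_pow (by positivity)]
  calc ENNReal.ofReal (min 1 (∑ n ∈ range N, |a (e n)| ^ r)) ^ m
      ≤ (min 1 (lrNorm r a) ^ r) ^ m := by
        gcongr
        exact ofReal_min_one_sum_le hr a he N
    _ = min 1 (lrNorm r a) ^ (r * m) := by rw [ENNReal.rpow_mul, ENNReal.rpow_natCast]
    _ ≤ min 1 (lrNorm r a) ^ b := ENNReal.rpow_le_rpow_of_exponent_ge (min_le_left _ _) hb

end LrNorm

lemma sum_Ico_toNat_add (F : ℤ → ℝ) {L : ℕ} {a : ℤ} (ha : -L ≤ a) (b : ℤ) :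
    ∑ n ∈ Ico (a + L).toNat (b + L).toNat, F (n - L) = ∑ i ∈ Ico a b, F i := by
  refine sum_nbij' (fun n : ℕ => (n : ℤ) - L) (fun i : ℤ => (i + L).toNat) ?_ ?_ ?_ ?_
    fun _ _ => rfl
  all_goals
    simp only [mem_Ico]
    omega

lemma blockSum_toNat_add (f g : ℤ → ℝ) {L : ℕ} {a : ℤ} (ha : -L ≤ a) (b : ℤ) :
    blockSum (fun n : ℕ => f (n - L)) (fun n : ℕ => g (n - L)) (a + L).toNat (b + L).toNat =
      blockSum f g a b := by
  rw [blockSum, blockSum, ← sum_Ico_toNat_add _ ha b]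
  refine sum_congr rfl fun n _ => ?_
  rw [← sum_Ico_toNat_add _ ha, sub_add_cancel, Int.toNat_natCast]

lemma eventually_one_le_weightedCount {ρ κ t : ℝ} (hρ : 0 < ρ) (hκ : 0 < κ) (hρκ : 1 < ρ * κ)
    (ht : 0 < t) {f g : ℤ → ℝ}
    (h : ENNReal.ofReal (4 * (ρ * κ)) < paraproductVariation t f g) :
    ∀ᶠ L : ℕ in atTop, 1 ≤ weightedCount ((ρ * κ) ^ (-t)) ρ κ L (fun n => f (n - L))
      (fun n => g (n - L)) (2 * L) := by
  simp only [paraproductVariation, lt_iSup_iff] at h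
  obtain ⟨N, hN, h⟩ := h
  obtain ⟨K, hK⟩ := exists_lt_sum_of_lt_lrNorm ht (by positivity) h
  filter_upwards [eventually_forall_exists_lt_pow_mul_abs hρκ
      (fun k => blockSum f g (N k) (N (k + 1))) K,
    eventually_ge_atTop (N 0).natAbs, eventually_ge_atTop (N K).natAbs] with L hL hL₀ hLK
  have hN₀ : ∀ k, -L ≤ N k := fun k => by have := hN k.zero_le; omega
  let N' : ℕ → ℕ := fun k => (N (min k K) + L).toNat
  have hN' : Monotone N' := fun k l hkl => by
    have := hN (min_le_min_right K hkl)
    simp only [N']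
    omega
  have hN'_le : ∀ k, N' k ≤ 2 * L := fun k => by
    have := hN (min_le_right k K)
    simp only [N']
    omega
  have hblock : ∀ k < K, blockSum (fun n : ℕ => f (n - L)) (fun n : ℕ => g (n - L)) (N' k)
      (N' (k + 1)) = blockSum f g (N k) (N (k + 1)) := fun k hk => by
    simp only [N', min_eq_left hk.le, min_eq_left (Nat.succ_le_of_lt hk)]
    exact blockSum_toNat_add f g (hN₀ k) _
  by_contra! hcount
  refine (sum_abs_blockSum_rpow_le hρ hκ ht hN' hN'_le (K := K) (fun k hk => ?_) hcount).not_gt ?_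
  · rw [hblock k hk]
    exact hL k hk
  · rwa [sum_congr rfl fun k hk => by rw [hblock k (mem_range.1 hk)]]

lemma measure_le_of_eventually_mem {s : Set Ω} {E : ℕ → Set Ω} {c : ℝ≥0∞}
    (hs : ∀ ω ∈ s, ∀ᶠ L in atTop, ω ∈ E L) (hE : ∀ L, μ (E L) ≤ c) : μ s ≤ c := by
  have hsubset : s ⊆ ⋃ L₀, ⋂ L ≥ L₀, E L := fun ω hω => by
    simpa [eventually_atTop] using hs ω hω
  have hmono : Monotone fun L₀ => ⋂ L ≥ L₀, E L := fun _ _ h =>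
    Set.biInter_subset_biInter_left fun _ => h.trans
  refine (measure_mono hsubset).trans ?_
  rw [hmono.measure_iUnion]
  exact iSup_le fun L => (measure_mono (Set.iInter₂_subset L le_rfl)).trans (hE L)

lemma IsConditionallySymmetric.comp_strictMono {ι ι' : Type*} [Preorder ι] [Preorder ι']
    {σ : ι → Ω → Ω} {f : ι → Ω → ℝ} (hf : IsConditionallySymmetric σ f) {e : ι' → ι}
    (he : StrictMono e) : IsConditionallySymmetric (σ ∘ e) (f ∘ e) where
  measurable i := hf.measurable (e i)
  apply_of_lt hij := hf.apply_of_lt (he hij)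
  apply_self i := hf.apply_self (e i)

lemma IsConditionallySymmetric.const_smul {ι : Type*} [LT ι] {σ : ι → Ω → Ω} {f : ι → Ω → ℝ}
    (hf : IsConditionallySymmetric σ f) (c : ℝ) : IsConditionallySymmetric σ (c • f) where
  measurable i := (hf.measurable i).const_smul c
  apply_of_lt hij ω := congrArg (c * ·) (hf.apply_of_lt hij ω)
  apply_self i ω := (congrArg (c * ·) (hf.apply_self i ω)).trans (mul_neg _ _)

/-- The constant in the weak-type estimate for `paraproductVariation`. -/
def weakTypeConst (C : ℝ) (M : ℕ) : ℝ≥0 :=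
  ((countConst C M).toNNReal + 1) * 2 ^ M

section WeakType

variable {ρ κ r s t C a b : ℝ} {M : ℕ} {σ : ℤ → Ω → Ω} {f g : ℤ → Ω → ℝ}

lemma measure_lt_paraproductVariation_le (hσ : ∀ i, MeasurePreserving (σ i) μ μ)
    (hf : IsConditionallySymmetric σ f) (hg : IsConditionallySymmetric σ g) (hr : 0 < r)
    (hs : 0 < s) (ht : 0 < t) (hρ : 0 < ρ) (hκ : 0 < κ) (hρκ : 1 < ρ * κ)
    (hρr : ControlsPower ((ρ * κ) ^ (-t)) ρ r C) (hκs : ControlsPower ((ρ * κ) ^ (-t)) κ s C)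
    (ha : a ≤ r * (M + 1)) (hb : b ≤ s * (M + 1)) :
    μ {ω | ENNReal.ofReal (4 * (ρ * κ)) < paraproductVariation t (f · ω) (g · ω)} ≤
      weakTypeConst C M *
        ∫⁻ ω, min 1 (lrNorm r (f · ω)) ^ a + min 1 (lrNorm s (g · ω)) ^ b ∂μ := by
  have hshift : ∀ L : ℕ, StrictMono fun n : ℕ => (n : ℤ) - L := fun L m n h => by
    simpa using h
  refine measure_le_of_eventually_mem
    (fun ω hω => eventually_one_le_weightedCount hρ hκ hρκ ht hω) fun L => ?_
  refine (measure_one_le_weightedCount_le_lintegral_min_one (fun n => hσ (n - L))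
    (hf.comp_strictMono (hshift L)) (hg.comp_strictMono (hshift L)) hr hs (by positivity) hρ.le
    hκ.le hρr hκs L M (2 * L)).trans ?_
  have hintegrand : ∀ ω, ENNReal.ofReal ((min 1 (∑ n ∈ range (2 * L), |f (n - L) ω| ^ r) +
      min 1 (∑ n ∈ range (2 * L), |g (n - L) ω| ^ s)) ^ (M + 1)) ≤
      2 ^ M * (min 1 (lrNorm r (f · ω)) ^ a + min 1 (lrNorm s (g · ω)) ^ b) := fun ω => by
    refine (ENNReal.ofReal_le_ofReal (add_pow_le (by positivity) (by positivity) _)).trans ?_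
    rw [ENNReal.ofReal_mul (by positivity), ENNReal.ofReal_add (by positivity) (by positivity),
      Nat.add_sub_cancel, ENNReal.ofReal_pow zero_le_two, ENNReal.ofReal_ofNat]
    gcongr
    · exact ofReal_min_one_sum_pow_le hr (by exact_mod_cast ha) (f · ω) (hshift L).injective _
    · exact ofReal_min_one_sum_pow_le hs (by exact_mod_cast hb) (g · ω) (hshift L).injective _
  refine (mul_le_mul_right (lintegral_mono hintegrand) _).trans_eq ?_
  rw [lintegral_const_mul' _ _ (by finiteness), ← mul_assoc]
  simp [weakTypeConst, ENNReal.ofReal]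

lemma paraproductVariation_smul_smul (ht : 0 < t) (c d : ℝ) (x y : ℤ → ℝ) :
    paraproductVariation t (c • x) (d • y) =
      ENNReal.ofReal |c * d| * paraproductVariation t x y := by
  have hsmul : ∀ N : ℕ → ℤ, (fun k => blockSum (c • x) (d • y) (N k) (N (k + 1))) =
      (c * d) • fun k => blockSum x y (N k) (N (k + 1)) := fun N => by
    ext k
    exact blockSum_smul_smul c d x y _ _
  simp only [paraproductVariation, hsmul, lrNorm_smul ht, ENNReal.mul_iSup]

lemma measure_mul_lt_paraproductVariation_le (hσ : ∀ i, MeasurePreserving (σ i) μ μ)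
    (hf : IsConditionallySymmetric σ f) (hg : IsConditionallySymmetric σ g) (hr : 0 < r)
    (hs : 0 < s) (ht : 0 < t) (hρ : 0 < ρ) (hκ : 0 < κ) (hρκ : 1 < ρ * κ)
    (hρr : ControlsPower ((ρ * κ) ^ (-t)) ρ r C) (hκs : ControlsPower ((ρ * κ) ^ (-t)) κ s C)
    (ha : a ≤ r * (M + 1)) (hb : b ≤ s * (M + 1)) {c d : ℝ≥0∞} (hc : c ≠ 0) (hc_top : c ≠ ⊤)
    (hd : d ≠ 0) (hd_top : d ≠ ⊤) :
    μ {ω | ENNReal.ofReal (4 * (ρ * κ)) * (c * d) < paraproductVariation t (f · ω) (g · ω)} ≤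
      weakTypeConst C M *
        ∫⁻ ω, min 1 (lrNorm r (f · ω) / c) ^ a + min 1 (lrNorm s (g · ω) / d) ^ b ∂μ := by
  have hinv : ∀ {z : ℝ≥0∞}, z ≠ 0 → z ≠ ⊤ → ENNReal.ofReal |z.toReal⁻¹| = z⁻¹ := fun h h_top => by
    rw [abs_of_nonneg (by positivity), ENNReal.ofReal_inv_of_pos (ENNReal.toReal_pos h h_top),
      ENNReal.ofReal_toReal h_top]
  have hnorm : ∀ {v : ℝ} {z : ℝ≥0∞}, 0 < v → z ≠ 0 → z ≠ ⊤ → ∀ x : ℤ → ℝ,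
      lrNorm v (z.toReal⁻¹ • x) = lrNorm v x / z := fun hv h h_top x => by
    rw [lrNorm_smul hv, hinv h h_top, div_eq_mul_inv, mul_comm]
  have hvariation : ∀ x y : ℤ → ℝ, paraproductVariation t (c.toReal⁻¹ • x) (d.toReal⁻¹ • y) =
      paraproductVariation t x y / (c * d) := fun x y => by
    rw [paraproductVariation_smul_smul ht, ← mul_inv, ← ENNReal.toReal_mul,
      hinv (mul_ne_zero hc hd) (ENNReal.mul_ne_top hc_top hd_top), div_eq_mul_inv, mul_comm]
  have hscaled := measure_lt_paraproductVariation_le hσ (hf.const_smul c.toReal⁻¹)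
    (hg.const_smul d.toReal⁻¹) hr hs ht hρ hκ hρκ hρr hκs ha hb
  change μ {ω | _ < paraproductVariation t (c.toReal⁻¹ • (f · ω)) (d.toReal⁻¹ • (g · ω))} ≤
    _ * ∫⁻ ω, min 1 (lrNorm r (c.toReal⁻¹ • (f · ω))) ^ a +
      min 1 (lrNorm s (d.toReal⁻¹ • (g · ω))) ^ b ∂μ at hscaled
  simp only [hnorm hr hc hc_top, hnorm hs hd hd_top, hvariation] at hscaled
  refine hscaled.trans' (measure_mono fun ω hω => ?_)
  rw [Set.mem_ofPred_eq, ENNReal.lt_div_iff_mul_lt (.inl (mul_ne_zero hc hd))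
    (.inl (ENNReal.mul_ne_top hc_top hd_top))]
  exact hω

end WeakType

/-! ### From weak type to strong type -/

section Interpolation

variable {u p q a b : ℝ} {R : ℝ≥0∞}

lemma rpow_le_tsum_ite (hu : 0 < u) (hR : R ≠ 0) (hR_top : R ≠ ⊤) (v : ℝ≥0∞) :
    v ^ u ≤ ∑' n : ℤ, if R * 2 ^ n < v then (R * 2 ^ (n + 1)) ^ u else 0 := by
  rcases eq_or_ne v 0 with rfl | hv
  · simp [hu]
  rcases eq_or_ne v ⊤ with rfl | hv_top
  · have hterm : ∀ n : ℕ, R ^ u ≤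
        if R * 2 ^ (n : ℤ) < ⊤ then (R * 2 ^ ((n : ℤ) + 1)) ^ u else 0 := fun n => by
      rw [if_pos (ENNReal.mul_lt_top hR_top.lt_top
        (ENNReal.zpow_lt_top two_ne_zero ofNat_ne_top _))]
      gcongr
      exact le_mul_of_one_le_right' (mod_cast one_le_pow₀ one_le_two (n := n + 1))
    calc (⊤ : ℝ≥0∞) ^ u
        ≤ ∑' _ : ℕ, R ^ u := le_top.trans_eq
          (ENNReal.tsum_const_eq_top_of_ne_zero (ENNReal.rpow_pos hR.bot_lt hR_top).ne').symm
      _ ≤ ∑' n : ℕ, if R * 2 ^ (n : ℤ) < ⊤ then (R * 2 ^ ((n : ℤ) + 1)) ^ u else 0 :=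
        ENNReal.tsum_le_tsum hterm
      _ ≤ _ := ENNReal.tsum_comp_le_tsum_of_injective Int.ofNat_injective _
  · obtain ⟨n, hn, hn'⟩ := ENNReal.exists_mem_Ioc_zpow (ENNReal.div_ne_zero.2 ⟨hv, hR_top⟩)
      (ENNReal.div_ne_top hv_top hR) one_lt_two ofNat_ne_top
    rw [ENNReal.lt_div_iff_mul_lt (.inl hR) (.inl hR_top), mul_comm] at hn
    rw [ENNReal.div_le_iff hR hR_top, mul_comm] at hn'
    refine (ENNReal.rpow_le_rpow hn' hu.le).trans (le_trans ?_ (ENNReal.le_tsum n))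
    rw [if_pos hn]

lemma lintegral_rpow_le_tsum_measure (hu : 0 < u) (hR : R ≠ 0) (hR_top : R ≠ ⊤)
    (V : Ω → ℝ≥0∞) :
    ∫⁻ ω, V ω ^ u ∂μ ≤ ∑' n : ℤ, (R * 2 ^ (n + 1)) ^ u * μ {ω | R * 2 ^ n < V ω} := by
  let S : ℤ → Set Ω := fun n => toMeasurable μ {ω | R * 2 ^ n < V ω}
  have hS : ∀ n, MeasurableSet (S n) := fun n => measurableSet_toMeasurable _ _
  calc ∫⁻ ω, V ω ^ u ∂μ
      ≤ ∫⁻ ω, ∑' n, (S n).indicator (fun _ => (R * 2 ^ (n + 1)) ^ u) ω ∂μ := by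
        refine lintegral_mono fun ω => (rpow_le_tsum_ite hu hR hR_top _).trans ?_
        refine ENNReal.tsum_le_tsum fun n => ?_
        split_ifs with h
        · rw [Set.indicator_of_mem (subset_toMeasurable μ _ h)]
        · exact zero_le
    _ = ∑' n : ℤ, (R * 2 ^ (n + 1)) ^ u * μ {ω | R * 2 ^ n < V ω} := by
        rw [lintegral_tsum fun n => (measurable_const.indicator (hS n)).aemeasurable]
        exact tsum_congr fun n => by rw [lintegral_indicator_const (hS n), measure_toMeasurable]

lemma two_rpow_div_zpow_rpow (hp : p ≠ 0) (n : ℤ) :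
    (((2 : ℝ≥0∞) ^ (u / p)) ^ n) ^ p = (2 ^ n) ^ u := by
  simp only [← ENNReal.rpow_intCast, ← ENNReal.rpow_mul]
  congr 1
  field_simp

lemma lintegral_rpow_le_of_measure_lt_le {V A B : Ω → ℝ≥0∞} {K G : ℝ≥0∞} (hu : 0 < u)
    (hp : p ≠ 0) (hq : q ≠ 0) (hA : Measurable A) (hB : Measurable B) (hR : R ≠ 0)
    (hR_top : R ≠ ⊤)
    (hGp : ∀ x : ℝ≥0∞, ∑' n : ℤ, ((2 ^ (u / p)) ^ n) ^ p *
      min 1 (x / (2 ^ (u / p)) ^ n) ^ a ≤ G * x ^ p)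
    (hGq : ∀ x : ℝ≥0∞, ∑' n : ℤ, ((2 ^ (u / q)) ^ n) ^ q *
      min 1 (x / (2 ^ (u / q)) ^ n) ^ b ≤ G * x ^ q)
    (hV : ∀ n : ℤ, μ {ω | R * 2 ^ n < V ω} ≤ K * ∫⁻ ω, min 1 (A ω / (2 ^ (u / p)) ^ n) ^ a +
      min 1 (B ω / (2 ^ (u / q)) ^ n) ^ b ∂μ) :
    ∫⁻ ω, V ω ^ u ∂μ ≤ (2 * R) ^ u * K * G * ∫⁻ ω, A ω ^ p + B ω ^ q ∂μ := by
  simp only [two_rpow_div_zpow_rpow hp, two_rpow_div_zpow_rpow hq] at hGp hGq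
  let W : ℤ → Ω → ℝ≥0∞ := fun n ω =>
    min 1 (A ω / (2 ^ (u / p)) ^ n) ^ a + min 1 (B ω / (2 ^ (u / q)) ^ n) ^ b
  have hW : ∀ n, Measurable (W n) := fun n => by fun_prop
  have hsum : ∀ ω, ∑' n : ℤ, (2 ^ n) ^ u * W n ω ≤ G * (A ω ^ p + B ω ^ q) := fun ω => by
    simp only [W, mul_add, ENNReal.tsum_add]
    exact add_le_add (hGp _) (hGq _)
  have hweight : ∀ n : ℤ, (R * 2 ^ (n + 1)) ^ u = (2 * R) ^ u * (2 ^ n) ^ u := fun n => by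
    rw [← ENNReal.mul_rpow_of_nonneg _ _ hu.le, ENNReal.zpow_add two_ne_zero ofNat_ne_top, zpow_one]
    ring_nf
  calc ∫⁻ ω, V ω ^ u ∂μ
      ≤ ∑' n : ℤ, (R * 2 ^ (n + 1)) ^ u * μ {ω | R * 2 ^ n < V ω} :=
        lintegral_rpow_le_tsum_measure hu hR hR_top V
    _ ≤ ∑' n : ℤ, (R * 2 ^ (n + 1)) ^ u * (K * ∫⁻ ω, W n ω ∂μ) :=
        ENNReal.tsum_le_tsum fun n => mul_le_mul_right (hV n) _
    _ = (2 * R) ^ u * K * ∫⁻ ω, ∑' n : ℤ, (2 ^ n) ^ u * W n ω ∂μ := by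
        rw [lintegral_tsum fun n => ((hW n).const_mul _).aemeasurable, ← ENNReal.tsum_mul_left]
        refine tsum_congr fun n => ?_
        rw [lintegral_const_mul _ (hW n), hweight]
        ring
    _ ≤ (2 * R) ^ u * K * ∫⁻ ω, G * (A ω ^ p + B ω ^ q) ∂μ := by
        gcongr with ω
        exact hsum ω
    _ = _ := by rw [lintegral_const_mul _ (by fun_prop), mul_assoc _ G]

end Interpolation

/-- The mixed norm `‖(∑ i, |f i| ^ r) ^ (1 / r)‖_{L^p(μ)}` over an arbitrary measure space. -/
def lrMixedNorm (p r : ℝ) (μ : Measure Ω) (f : ℤ → Ω → ℝ) : ℝ≥0∞ :=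
  (∫⁻ ω, lrNorm r (f · ω) ^ p ∂μ) ^ (1 / p)

section StrongType

variable {p q r s t ρ κ C : ℝ} {M : ℕ} {σ : ℤ → Ω → Ω} {f g : ℤ → Ω → ℝ}

lemma ae_eq_zero_of_lrMixedNorm_eq_zero (hp : 0 < p) (hr : 0 < r) (hf : ∀ i, Measurable (f i))
    (h : lrMixedNorm p r μ f = 0) : ∀ᵐ ω ∂μ, (f · ω) = 0 := by
  rw [lrMixedNorm, ENNReal.rpow_eq_zero_iff_of_pos (one_div_pos.2 hp),
    lintegral_eq_zero_iff ((measurable_lrNorm hf r).pow_const p)] at h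
  filter_upwards [h] with ω hω
  exact (lrNorm_eq_zero_iff hr).1 ((ENNReal.rpow_eq_zero_iff_of_pos hp).1 hω)

lemma lintegral_lrNorm_div_lrMixedNorm_rpow (hp : 0 < p) (h : lrMixedNorm p r μ f ≠ 0)
    (h_top : lrMixedNorm p r μ f ≠ ⊤) :
    ∫⁻ ω, (lrNorm r (f · ω) / lrMixedNorm p r μ f) ^ p ∂μ = 1 := by
  have hpow : lrMixedNorm p r μ f ^ p = ∫⁻ ω, lrNorm r (f · ω) ^ p ∂μ := by
    rw [lrMixedNorm, ← ENNReal.rpow_mul, one_div_mul_cancel hp.ne', ENNReal.rpow_one]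
  simp only [ENNReal.div_rpow_of_nonneg _ _ hp.le]
  simp only [div_eq_mul_inv]
  have h₀ := (ENNReal.rpow_pos h.bot_lt h_top (p := p)).ne'
  rw [lintegral_mul_const' _ _ (ENNReal.inv_ne_top.2 h₀), ← hpow,
    ENNReal.mul_inv_cancel h₀ (ENNReal.rpow_ne_top_of_nonneg hp.le h_top)]

lemma paraproductVariation_eq_zero (ht : 0 < t) {x y : ℤ → ℝ} (h : x = 0 ∨ y = 0) :
    paraproductVariation t x y = 0 := by
  have hblock : ∀ a b, blockSum x y a b = 0 := fun a b => by
    rcases h with rfl | rfl <;> simp [blockSum]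
  simp only [paraproductVariation, hblock, ENNReal.iSup_eq_zero]
  exact fun N _ => (lrNorm_eq_zero_iff ht).2 rfl

lemma div_mul_eq_div_div_of_ne {a b : ℝ≥0∞} (ha : a ≠ 0) (ha_top : a ≠ ⊤) (x : ℝ≥0∞) :
    x / (a * b) = x / a / b := by
  rw [div_eq_mul_inv, ENNReal.mul_inv (.inl ha) (.inl ha_top), ← mul_assoc, ← div_eq_mul_inv,
    ← div_eq_mul_inv]

lemma two_rpow_div_zpow_mul_two_rpow_div_zpow {u : ℝ} (h : u / p + u / q = 1) (n : ℤ) :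
    ((2 : ℝ≥0∞) ^ (u / p)) ^ n * (2 ^ (u / q)) ^ n = 2 ^ n := by
  simp only [← ENNReal.rpow_intCast, ← ENNReal.rpow_mul]
  rw [← ENNReal.rpow_add _ _ two_ne_zero ofNat_ne_top, ← add_mul, h, one_mul]

lemma lintegral_paraproductVariation_rpow_le {u : ℝ} {A : ℝ≥0}
    (hσ : ∀ i, MeasurePreserving (σ i) μ μ) (hf : IsConditionallySymmetric σ f)
    (hg : IsConditionallySymmetric σ g) (hp : 0 < p) (hq : 0 < q) (hr : 0 < r) (hs : 0 < s)
    (ht : 0 < t) (hu : 0 < u) (hupq : u / p + u / q = 1) (hρ : 0 < ρ) (hκ : 0 < κ)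
    (hρκ : 1 < ρ * κ) (hρr : ControlsPower ((ρ * κ) ^ (-t)) ρ r C)
    (hκs : ControlsPower ((ρ * κ) ^ (-t)) κ s C) (hpM : 2 * p ≤ r * (M + 1))
    (hqM : 2 * q ≤ s * (M + 1))
    (hGp : ∀ x : ℝ≥0∞, ∑' n : ℤ, ((2 ^ (u / p)) ^ n) ^ p *
      min 1 (x / (2 ^ (u / p)) ^ n) ^ (2 * p) ≤ A * x ^ p)
    (hGq : ∀ x : ℝ≥0∞, ∑' n : ℤ, ((2 ^ (u / q)) ^ n) ^ q *
      min 1 (x / (2 ^ (u / q)) ^ n) ^ (2 * q) ≤ A * x ^ q)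
    (hf₀ : lrMixedNorm p r μ f ≠ 0) (hf_top : lrMixedNorm p r μ f ≠ ⊤)
    (hg₀ : lrMixedNorm q s μ g ≠ 0) (hg_top : lrMixedNorm q s μ g ≠ ⊤) :
    ∫⁻ ω, paraproductVariation t (f · ω) (g · ω) ^ u ∂μ ≤
      (2 * (ENNReal.ofReal (4 * (ρ * κ)) * (lrMixedNorm p r μ f * lrMixedNorm q s μ g))) ^ u *
        weakTypeConst C M * A * 2 := by
  have htwo : ∀ (e : ℝ) (n : ℤ), ((2 : ℝ≥0∞) ^ e) ^ n ≠ 0 ∧ ((2 : ℝ≥0∞) ^ e) ^ n ≠ ⊤ := by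
    intro e n
    simp only [← ENNReal.rpow_intCast, ← ENNReal.rpow_mul]
    exact ⟨(ENNReal.rpow_pos two_pos ofNat_ne_top).ne', by finiteness⟩
  have hweak : ∀ n : ℤ, μ {ω | ENNReal.ofReal (4 * (ρ * κ)) *
      (lrMixedNorm p r μ f * lrMixedNorm q s μ g) * 2 ^ n <
        paraproductVariation t (f · ω) (g · ω)} ≤ weakTypeConst C M *
      ∫⁻ ω, min 1 (lrNorm r (f · ω) / lrMixedNorm p r μ f / (2 ^ (u / p)) ^ n) ^ (2 * p) +
        min 1 (lrNorm s (g · ω) / lrMixedNorm q s μ g / (2 ^ (u / q)) ^ n) ^ (2 * q) ∂μ := by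
    intro n
    simp only [← div_mul_eq_div_div_of_ne hf₀ hf_top, ← div_mul_eq_div_div_of_ne hg₀ hg_top]
    rw [mul_assoc, ← two_rpow_div_zpow_mul_two_rpow_div_zpow hupq, mul_mul_mul_comm]
    exact measure_mul_lt_paraproductVariation_le hσ hf hg hr hs ht hρ hκ hρκ hρr hκs hpM hqM
      (mul_ne_zero hf₀ (htwo _ n).1) (ENNReal.mul_ne_top hf_top (htwo _ n).2)
      (mul_ne_zero hg₀ (htwo _ n).1) (ENNReal.mul_ne_top hg_top (htwo _ n).2)
  refine (lintegral_rpow_le_of_measure_lt_le hu hp.ne' hq.ne'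
    ((measurable_lrNorm hf.measurable r).div_const _)
    ((measurable_lrNorm hg.measurable s).div_const _)
    (mul_ne_zero (by simp [hρ, hκ]) (mul_ne_zero hf₀ hg₀)) (by finiteness) hGp hGq
    hweak).trans_eq ?_
  rw [lintegral_add_left (((measurable_lrNorm hf.measurable r).div_const _).pow_const p),
    lintegral_lrNorm_div_lrMixedNorm_rpow hp hf₀ hf_top,
    lintegral_lrNorm_div_lrMixedNorm_rpow hq hg₀ hg_top, one_add_one_eq_two]

lemma exists_controlsPower_controlsPower (hr : 0 < r) (hr₂ : r ≤ 2) (hs : 0 < s) (hs₂ : s ≤ 2)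
    (ht : 0 < t) (hts : 1 / t ≤ 1 / r + 1 / s) (hcase : max r s < 2 ∨ r * s / (r + s) < t) :
    ∃ ρ κ C : ℝ, 0 < ρ ∧ 0 < κ ∧ 1 < ρ * κ ∧ ControlsPower ((ρ * κ) ^ (-t)) ρ r C ∧
      ControlsPower ((ρ * κ) ^ (-t)) κ s C := by
  have hweight : ∀ v : ℝ, 0 < v → ((2 : ℝ) ^ (1 / r) * 2 ^ (1 / s)) ^ (-t) * (2 ^ (1 / v)) ^ v =
      2 ^ (1 - t * (1 / r + 1 / s)) := fun v hv => by
    rw [← Real.rpow_add two_pos, ← Real.rpow_mul two_pos.le, ← Real.rpow_mul two_pos.le,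
      ← Real.rpow_add two_pos, one_div_mul_cancel hv.ne']
    ring_nf
  have hle : (2 : ℝ) ^ (1 - t * (1 / r + 1 / s)) ≤ 1 :=
    Real.rpow_le_one_of_one_le_of_nonpos one_le_two <| sub_nonpos.2 <| by
      rwa [div_le_iff₀' ht] at hts
  have hlt : (r < 2 ∧ s < 2) ∨ (2 : ℝ) ^ (1 - t * (1 / r + 1 / s)) < 1 := by
    refine hcase.imp max_lt_iff.1 fun h => Real.rpow_lt_one_of_one_lt_of_neg one_lt_two ?_
    rw [div_lt_iff₀ (by positivity)] at h
    rw [sub_neg, div_add_div _ _ hr.ne' hs.ne', ← mul_div_assoc, lt_div_iff₀ (by positivity)]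
    linarith
  have hone : ∀ v : ℝ, 0 < v → 1 < (2 : ℝ) ^ (1 / v) := fun v hv =>
    Real.one_lt_rpow one_lt_two (one_div_pos.2 hv)
  obtain ⟨C₁, hC₁⟩ := exists_controlsPower (w := (2 ^ (1 / r) * 2 ^ (1 / s)) ^ (-t))
    (by positivity) (hone r hr) hr hr₂ (by rwa [hweight r hr])
    (by rw [hweight r hr]; exact hlt.imp_left And.left)
  obtain ⟨C₂, hC₂⟩ := exists_controlsPower (w := (2 ^ (1 / r) * 2 ^ (1 / s)) ^ (-t))
    (by positivity) (hone s hs) hs hs₂ (by rwa [hweight s hs])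
    (by rw [hweight s hs]; exact hlt.imp_left And.right)
  exact ⟨_, _, max C₁ C₂, by positivity, by positivity, one_lt_mul_of_lt_of_le (hone r hr)
    (hone s hs).le, hC₁.mono (le_max_left _ _), hC₂.mono (le_max_right _ _)⟩

lemma exists_tsum_two_rpow_zpow_mul_min_one_le {u : ℝ} (hu : 0 < u) (hp : 0 < p) :
    ∃ G : ℝ≥0, ∀ x : ℝ≥0∞, ∑' n : ℤ, ((2 ^ (u / p)) ^ n) ^ p *
      min 1 (x / (2 ^ (u / p)) ^ n) ^ (2 * p) ≤ G * x ^ p :=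
  exists_tsum_zpow_mul_min_one_le (ENNReal.one_lt_rpow one_lt_two (div_pos hu hp))
    (by finiteness) hp (by linarith)

lemma lintegral_paraproductVariation_rpow_eq_zero {u : ℝ} (hp : 0 < p) (hq : 0 < q) (hr : 0 < r)
    (hs : 0 < s) (ht : 0 < t) (hu : 0 < u) (hf : ∀ i, Measurable (f i))
    (hg : ∀ i, Measurable (g i)) (h : lrMixedNorm p r μ f = 0 ∨ lrMixedNorm q s μ g = 0) :
    ∫⁻ ω, paraproductVariation t (f · ω) (g · ω) ^ u ∂μ = 0 := by
  have hzero : ∀ᵐ ω ∂μ, (f · ω) = 0 ∨ (g · ω) = 0 := by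
    rcases h with h | h
    · exact (ae_eq_zero_of_lrMixedNorm_eq_zero hp hr hf h).mono fun _ => .inl
    · exact (ae_eq_zero_of_lrMixedNorm_eq_zero hq hs hg h).mono fun _ => .inr
  refine (lintegral_congr_ae (hzero.mono fun ω hω => ?_)).trans lintegral_zero
  simp only [paraproductVariation_eq_zero ht hω, ENNReal.zero_rpow_of_pos hu]

lemma exists_lintegral_paraproductVariation_rpow_le_of_ne (hp : 0 < p) (hq : 0 < q) (hr : 0 < r)
    (hr₂ : r ≤ 2) (hs : 0 < s) (hs₂ : s ≤ 2) (ht : 0 < t) (hts : 1 / t ≤ 1 / r + 1 / s)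
    (hcase : max r s < 2 ∨ r * s / (r + s) < t) {u : ℝ} (hu : 0 < u) (hupq : u / p + u / q = 1) :
    ∃ K : ℝ≥0, ∀ {Ω : Type*} [MeasurableSpace Ω] {μ : Measure Ω} {σ : ℤ → Ω → Ω}
      {f g : ℤ → Ω → ℝ}, (∀ i, MeasurePreserving (σ i) μ μ) → IsConditionallySymmetric σ f →
      IsConditionallySymmetric σ g → lrMixedNorm p r μ f ≠ 0 → lrMixedNorm p r μ f ≠ ⊤ →
      lrMixedNorm q s μ g ≠ 0 → lrMixedNorm q s μ g ≠ ⊤ →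
      ∫⁻ ω, paraproductVariation t (f · ω) (g · ω) ^ u ∂μ ≤
        K * (lrMixedNorm p r μ f * lrMixedNorm q s μ g) ^ u := by
  obtain ⟨ρ, κ, C, hρ, hκ, hρκ, hρr, hκs⟩ :=
    exists_controlsPower_controlsPower hr hr₂ hs hs₂ ht hts hcase
  obtain ⟨Gp, hGp⟩ := exists_tsum_two_rpow_zpow_mul_min_one_le hu hp
  obtain ⟨Gq, hGq⟩ := exists_tsum_two_rpow_zpow_mul_min_one_le hu hq
  obtain ⟨M, hM⟩ := exists_nat_gt (max (2 * p / r) (2 * q / s))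
  rw [max_lt_iff, div_lt_iff₀' hr, div_lt_iff₀' hs] at hM
  refine ⟨(2 * (4 * (ρ * κ)).toNNReal) ^ u * weakTypeConst C M * max Gp Gq * 2,
    fun hσ hf hg hf₀ hf_top hg₀ hg_top => ?_⟩
  refine (lintegral_paraproductVariation_rpow_le (A := max Gp Gq) (M := M) hσ hf hg hp hq hr hs ht
    hu hupq hρ hκ hρκ hρr hκs (by linarith) (by linarith) (fun x => (hGp x).trans ?_)
    (fun x => (hGq x).trans ?_) hf₀ hf_top hg₀ hg_top).trans_eq ?_
  · gcongr
    exact le_max_left _ _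
  · gcongr
    exact le_max_right _ _
  · rw [← mul_assoc 2, ENNReal.mul_rpow_of_nonneg _ _ hu.le]
    push_cast [ENNReal.coe_rpow_of_nonneg _ hu.le]
    rw [ENNReal.ofReal]
    ring

theorem exists_lintegral_paraproductVariation_rpow_le (hp : 0 < p) (hq : 0 < q) (hr : 0 < r)
    (hr₂ : r ≤ 2) (hs : 0 < s) (hs₂ : s ≤ 2) (ht : 0 < t) (hts : 1 / t ≤ 1 / r + 1 / s)
    (hcase : max r s < 2 ∨ r * s / (r + s) < t) :
    ∃ C : ℝ≥0, 0 < C ∧ ∀ {Ω : Type*} [MeasurableSpace Ω] {μ : Measure Ω} {σ : ℤ → Ω → Ω}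
      {f g : ℤ → Ω → ℝ}, (∀ i, MeasurePreserving (σ i) μ μ) → IsConditionallySymmetric σ f →
      IsConditionallySymmetric σ g →
      (∫⁻ ω, paraproductVariation t (f · ω) (g · ω) ^ (p * q / (p + q)) ∂μ) ^
        ((p + q) / (p * q)) ≤ C * lrMixedNorm p r μ f * lrMixedNorm q s μ g := by
  set u := p * q / (p + q) with hu_def
  have hu : 0 < u := by positivity
  have hinv : (p + q) / (p * q) = u⁻¹ := by rw [hu_def, inv_div]
  have hupq : u / p + u / q = 1 := by
    rw [hu_def]
    field_simp
    ring
  obtain ⟨K, hK⟩ := exists_lintegral_paraproductVariation_rpow_le_of_ne hp hq hr hr₂ hs hs₂ ht hts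
    hcase hu hupq
  refine ⟨K ^ u⁻¹ + 1, by positivity, fun {Ω} _ {μ σ f g} hσ hf hg => ?_⟩
  rw [hinv]
  by_cases hzero : lrMixedNorm p r μ f = 0 ∨ lrMixedNorm q s μ g = 0
  · rw [lintegral_paraproductVariation_rpow_eq_zero hp hq hr hs ht hu hf.measurable hg.measurable
      hzero, ENNReal.zero_rpow_of_pos (inv_pos.2 hu)]
    exact zero_le
  obtain ⟨hf₀, hg₀⟩ := not_or.1 hzero
  rcases eq_or_ne (lrMixedNorm p r μ f) ⊤ with hf_top | hf_top
  · simp [hf_top, hg₀]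
  rcases eq_or_ne (lrMixedNorm q s μ g) ⊤ with hg_top | hg_top
  · simp [hg_top, hf₀]
  calc (∫⁻ ω, paraproductVariation t (f · ω) (g · ω) ^ u ∂μ) ^ u⁻¹
      ≤ (K * (lrMixedNorm p r μ f * lrMixedNorm q s μ g) ^ u) ^ u⁻¹ := by
        gcongr
        exact hK hσ hf hg hf₀ hf_top hg₀ hg_top
    _ = (K : ℝ≥0∞) ^ u⁻¹ * lrMixedNorm p r μ f * lrMixedNorm q s μ g := by
        rw [ENNReal.mul_rpow_of_nonneg _ _ (by positivity), ENNReal.rpow_rpow_inv hu.ne', mul_assoc]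
    _ ≤ ↑(K ^ u⁻¹ + 1) * lrMixedNorm p r μ f * lrMixedNorm q s μ g := by
        rw [ENNReal.coe_add, ENNReal.coe_rpow_of_nonneg _ (by positivity)]
        gcongr
        exact le_self_add

end StrongType

/-! ### Discrete Littlewood–Paley families -/

lemma measurePreserving_ite_add_sub {G : Type*} [AddGroup G] [MeasurableSpace G] [MeasurableAdd G]
    (ν : Measure G) [ν.IsAddRightInvariant] {E : Set G} [DecidablePred (· ∈ E)]
    (hE : MeasurableSet E) {a : G} (ha : ∀ x, x + a ∈ E ↔ x ∉ E) :
    MeasurePreserving (fun x => if x ∈ E then x + a else x - a) ν ν := by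
  have ha' : ∀ x, x - a ∈ E ↔ x ∉ E := fun x => by
    rw [← not_iff_not, ← ha, sub_add_cancel, not_not]
  have hmeas : Measurable fun x => if x ∈ E then x + a else x - a := by
    simp only [sub_eq_add_neg]
    exact Measurable.ite hE (measurable_add_const a) (measurable_add_const (-a))
  refine ⟨hmeas, Measure.ext fun S hS => ?_⟩
  rw [Measure.map_apply hmeas hS, ← measure_inter_add_sdiff _ hE, ← measure_inter_add_sdiff S hE,
    add_comm]
  congr 1
  · rw [← measure_preimage_add_right ν (-a) (S ∩ E)]
    congr 1
    ext x
    by_cases hx : x ∈ E <;> simp [← sub_eq_add_neg, ha', hx]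
  · rw [← measure_preimage_add_right ν a (S \ E)]
    congr 1
    ext x
    by_cases hx : x ∈ E <;> simp [ha, hx]

lemma mem_dyadicInterval_iff {i m : ℤ} {x : ℝ} :
    x ∈ dyadicInterval i m ↔ ⌊(2 : ℝ) ^ i * x⌋ = m := by
  rw [Int.floor_eq_iff, dyadicInterval, Set.mem_Ico, zpow_neg, ← div_eq_mul_inv, ← div_eq_mul_inv,
    div_le_iff₀ (by positivity), lt_div_iff₀ (by positivity), mul_comm x]

lemma measurableSet_dyadicInterval (i m : ℤ) : MeasurableSet (dyadicInterval i m) :=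
  measurableSet_Ico

lemma floor_two_zpow_mul_add (i : ℤ) (x : ℝ) :
    ⌊(2 : ℝ) ^ i * (x + 2 ^ (-i))⌋ = ⌊(2 : ℝ) ^ i * x⌋ + 1 := by
  rw [mul_add, ← zpow_add₀ two_ne_zero, add_neg_cancel, zpow_zero, Int.floor_add_one]

lemma floor_two_zpow_mul_sub (i : ℤ) (x : ℝ) :
    ⌊(2 : ℝ) ^ i * (x - 2 ^ (-i))⌋ = ⌊(2 : ℝ) ^ i * x⌋ - 1 := by
  rw [mul_sub, ← zpow_add₀ two_ne_zero, add_neg_cancel, zpow_zero, Int.floor_sub_one]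

lemma floor_two_zpow_sub_mul (i : ℤ) (n : ℕ) (x : ℝ) :
    ⌊(2 : ℝ) ^ (i - n) * x⌋ = ⌊(2 : ℝ) ^ i * x⌋ / (2 ^ n : ℕ) := by
  rw [← Int.floor_div_natCast, zpow_sub₀ two_ne_zero, zpow_natCast, Nat.cast_pow, Nat.cast_ofNat,
    div_mul_eq_mul_div]

lemma measurable_floor_two_zpow_mul (i : ℤ) : Measurable fun x : ℝ => ⌊(2 : ℝ) ^ i * x⌋ :=
  (measurable_const_mul _).floor

/-- The reflection exchanging the two halves of each dyadic interval of length `2 ^ (1 - i)`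
by translation. -/
def dyadicReflection (i : ℤ) (x : ℝ) : ℝ :=
  if Even ⌊(2 : ℝ) ^ i * x⌋ then x + 2 ^ (-i) else x - 2 ^ (-i)

lemma measurePreserving_dyadicReflection (i : ℤ) : MeasurePreserving (dyadicReflection i) :=
  measurePreserving_ite_add_sub volume (E := {x | Even ⌊(2 : ℝ) ^ i * x⌋})
    (measurable_floor_two_zpow_mul i (MeasurableSet.of_discrete (s := {m : ℤ | Even m})))
    fun x => by simp only [Set.mem_ofPred_eq, floor_two_zpow_mul_add, Int.even_add_one]

lemma floor_two_zpow_mul_dyadicReflection {i j : ℤ} (h : i < j) (x : ℝ) :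
    ⌊(2 : ℝ) ^ i * dyadicReflection j x⌋ = ⌊(2 : ℝ) ^ i * x⌋ := by
  have hhalf : ⌊(2 : ℝ) ^ j * dyadicReflection j x⌋ / 2 = ⌊(2 : ℝ) ^ j * x⌋ / 2 := by
    rw [dyadicReflection]
    split_ifs with heven
    · rw [floor_two_zpow_mul_add]
      grind
    · rw [floor_two_zpow_mul_sub]
      grind
  obtain ⟨n, rfl⟩ : ∃ n : ℕ, i = j - (n + 1 : ℕ) := ⟨(j - i - 1).toNat, by omega⟩
  rw [floor_two_zpow_sub_mul, floor_two_zpow_sub_mul, pow_succ', Nat.cast_mul, Nat.cast_ofNat,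
    ← Int.ediv_ediv_of_nonneg two_pos.le, ← Int.ediv_ediv_of_nonneg two_pos.le, hhalf]

lemma dyadicInterval_sub_one (i k : ℤ) :
    dyadicInterval (i - 1) k = dyadicInterval i (2 * k) ∪ dyadicInterval i (2 * k + 1) := by
  ext x
  have hfloor := floor_two_zpow_sub_mul i 1 x
  simp only [Nat.cast_one, pow_one, Nat.cast_ofNat] at hfloor
  simp only [Set.mem_union, mem_dyadicInterval_iff, hfloor]
  omega

namespace IsDiscLPFamily

variable {f : ℤ → ℝ → ℝ}

lemma eq_of_floor_eq (hf : IsDiscLPFamily f) {i : ℤ} {x y : ℝ}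
    (h : ⌊(2 : ℝ) ^ i * x⌋ = ⌊(2 : ℝ) ^ i * y⌋) : f i x = f i y :=
  hf.2.1 i _ x (mem_dyadicInterval_iff.2 h) y (mem_dyadicInterval_iff.2 rfl)

lemma measurable (hf : IsDiscLPFamily f) (i : ℤ) : Measurable (f i) := by
  have hfactor : f i = (fun m : ℤ => f i (2 ^ (-i) * m)) ∘ fun x => ⌊(2 : ℝ) ^ i * x⌋ := by
    ext x
    refine hf.eq_of_floor_eq ?_
    rw [← mul_assoc, ← zpow_add₀ two_ne_zero, add_neg_cancel, zpow_zero, one_mul,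
      Int.floor_intCast]
  rw [hfactor]
  exact Measurable.of_discrete.comp (measurable_floor_two_zpow_mul i)

lemma setIntegral_dyadicInterval (hf : IsDiscLPFamily f) {i m : ℤ} {x : ℝ}
    (hx : x ∈ dyadicInterval i m) : ∫ y in dyadicInterval i m, f i y = 2 ^ (-i) * f i x := by
  rw [setIntegral_congr_fun (measurableSet_dyadicInterval i m) fun y hy => hf.2.1 i m y hy x hx,
    setIntegral_const, smul_eq_mul, dyadicInterval,
    Real.volume_real_Ico_of_le (by gcongr; linarith)]
  ring

lemma apply_eq_neg (hf : IsDiscLPFamily f) {i k : ℤ} {y z : ℝ}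
    (hy : ⌊(2 : ℝ) ^ i * y⌋ = 2 * k) (hz : ⌊(2 : ℝ) ^ i * z⌋ = 2 * k + 1) : f i z = -f i y := by
  have hdisjoint : Disjoint (dyadicInterval i (2 * k)) (dyadicInterval i (2 * k + 1)) :=
    Set.disjoint_left.2 fun x h₁ h₂ => by
      rw [mem_dyadicInterval_iff] at h₁ h₂
      omega
  have hintegrable : ∀ m, IntegrableOn (f i) (dyadicInterval i m) := fun m =>
    ((hf.1 i).integrableOn_isCompact isCompact_Icc).mono_set Set.Ico_subset_Icc_self
  have hzero := hf.2.2 i k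
  rw [dyadicInterval_sub_one, setIntegral_union hdisjoint
    (measurableSet_dyadicInterval _ _) (hintegrable _) (hintegrable _),
    hf.setIntegral_dyadicInterval (mem_dyadicInterval_iff.2 hy),
    hf.setIntegral_dyadicInterval (mem_dyadicInterval_iff.2 hz), ← mul_add] at hzero
  exact eq_neg_of_add_eq_zero_right ((mul_eq_zero.1 hzero).resolve_left (by positivity))

lemma isConditionallySymmetric (hf : IsDiscLPFamily f) :
    IsConditionallySymmetric dyadicReflection f where
  measurable := hf.measurable
  apply_of_lt hij x := hf.eq_of_floor_eq (floor_two_zpow_mul_dyadicReflection hij x)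
  apply_self i x := by
    rw [dyadicReflection]
    split_ifs with heven
    · obtain ⟨k, hk⟩ := heven.two_dvd
      exact hf.apply_eq_neg hk (by rw [floor_two_zpow_mul_add, hk])
    · obtain ⟨k, hk⟩ := Int.not_even_iff_odd.1 heven
      refine (neg_eq_iff_eq_neg.2 (hf.apply_eq_neg ?_ hk)).symm
      rw [floor_two_zpow_mul_sub, hk, add_sub_cancel_right]

end IsDiscLPFamily

lemma sum_Ioc_sum_Ioo_eq_blockSum (f g : ℤ → ℝ) (a b : ℤ) :
    ∑ j ∈ Ioc a b, ∑ i ∈ Ioo a j, f i * g j = blockSum f g (a + 1) (b + 1) := by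
  have hIoo : ∀ j, Ioo a j = Ico (a + 1) j := fun j => by
    ext i
    simp only [mem_Ioo, mem_Ico]
    omega
  have hIoc : Ioc a b = Ico (a + 1) (b + 1) := by
    ext i
    simp only [mem_Ioc, mem_Ico]
    omega
  simp only [blockSum, hIoo, hIoc]

theorem bilinear_variational_paraproduct_discrete_general
    (p q r s t : ℝ) (hp : 0 < p) (hq : 0 < q) (hr : 0 < r) (hr₂ : r ≤ 2) (hs : 0 < s)
    (hs₂ : s ≤ 2) (ht : 0 < t) (hts : 1 / t ≤ 1 / r + 1 / s)
    (hcase : max r s < 2 ∨ r * s / (r + s) < t) :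
    ∃ C : ℝ≥0, 0 < C ∧
      ∀ (f g : ℤ → ℝ → ℝ), IsDiscLPFamily f → IsDiscLPFamily g →
      ∀ (Nk : ℕ → ℝ → ℤ), (∀ k x, Nk k x ≤ Nk (k + 1) x) →
      (∫⁻ x : ℝ,
          ((∑' k : ℕ, (ENNReal.ofReal
              |∑ j ∈ Finset.Ioc (Nk k x) (Nk (k + 1) x),
                ∑ i ∈ Finset.Ioo (Nk k x) j, f i x * g j x|) ^ t) ^ (1 / t))
            ^ (p * q / (p + q))) ^ ((p + q) / (p * q))
        ≤ (C : ℝ≥0∞) * mixedNorm p r f * mixedNorm q s g := by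
  obtain ⟨C, hC, hbound⟩ :=
    exists_lintegral_paraproductVariation_rpow_le hp hq hr hr₂ hs hs₂ ht hts hcase
  refine ⟨C, hC, fun f g hf hg Nk hN => le_trans ?_ (hbound measurePreserving_dyadicReflection
    hf.isConditionallySymmetric hg.isConditionallySymmetric)⟩
  gcongr with x
  simp only [sum_Ioc_sum_Ioo_eq_blockSum (f · x) (g · x)]
  exact le_iSup₂_of_le (fun k => Nk k x + 1)
    (monotone_nat_of_le_succ fun k => by gcongr; exact hN k x) le_rfl

/-- Strong-type bilinear variational paraproduct estimate, discrete case
(containing the Friz–Victoir martingale inequality). -/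
theorem bilinear_variational_paraproduct_discrete
    (p q r s t : ℝ) (hp : 1 < p) (hq : 1 < q)
    (hr1 : 1 ≤ r) (hr2 : r ≤ 2) (hs1 : 1 ≤ s) (hs2 : s ≤ 2)
    (ht : 0 < t) (hts : 1 / t ≤ 1 / r + 1 / s)
    (hcase : max r s < 2 ∨ r * s / (r + s) < t) :
    ∃ C : ℝ≥0, 0 < C ∧
      ∀ (f g : ℤ → ℝ → ℝ), IsDiscLPFamily f → IsDiscLPFamily g →
      ∀ (Nk : ℕ → ℝ → ℤ), IsJumpCollection Nk →
      (∫⁻ x : ℝ,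
          ((∑' k : ℕ, (ENNReal.ofReal
              |∑ j ∈ Finset.Ioc (Nk k x) (Nk (k + 1) x),
                ∑ i ∈ Finset.Ioo (Nk k x) j, f i x * g j x|) ^ t) ^ (1 / t))
            ^ (p * q / (p + q))) ^ ((p + q) / (p * q))
        ≤ (C : ℝ≥0∞) * mixedNorm p r f * mixedNorm q s g := by
  obtain ⟨C, hC, hbound⟩ := bilinear_variational_paraproduct_discrete_general p q r s t
    (by linarith) (by linarith) (by linarith) hr2 (by linarith) hs2 ht hts hcase
  exact ⟨C, hC, fun f g hf hg Nk hN => hbound f g hf hg Nk hN.2⟩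

end
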